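/- arXiv:2405.00730 — 7 statements merged into one kernel-verified Lean document; each statement's English description precedes it below -/
import Mathlib

section
/- Let V be a bounded symmetric bilinear form on H¹(ℝ). Then m(V) = inf_{a∈ℝ} F(a;V), where both sides are taken as infima with values in [−∞, ∞). (Decomposition principle.) -/
open MeasureTheory Filter Real Topology

/-- The supremum norm `‖u‖_∞` of a (bounded continuous) function `u : ℝ → ℝ`. -/
noncomputable def supNorm (u : ℝ → ℝ) : ℝ := ⨆ x : ℝ, |u x|

/-- `u` is (the continuous representative of) an element of `H¹(ℝ)`:
`u` is continuous, `u ∈ L²(ℝ)`, and there is a weak derivative `u' ∈ L²(ℝ)`,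
i.e. `u x = u 0 + ∫_0^x u'`. -/
def IsH1 (u : ℝ → ℝ) : Prop :=
  Continuous u ∧ MemLp u 2 (volume : Measure ℝ) ∧
    ∃ u' : ℝ → ℝ, MemLp u' 2 (volume : Measure ℝ) ∧
      ∀ x : ℝ, u x = u 0 + ∫ t in (0:ℝ)..x, u' t

/-- The Dirichlet energy `∫_ℝ |u'(x)|² dx`.  (For `u ∈ H¹(ℝ)` the classical
derivative `deriv u` exists a.e. and coincides a.e. with the weak derivative.) -/
noncomputable def energy (u : ℝ → ℝ) : ℝ := ∫ x : ℝ, (deriv u x) ^ 2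

/-- The `H¹(ℝ)` norm `(∫ |u|² + ∫ |u'|²)^{1/2}`. -/
noncomputable def h1Norm (u : ℝ → ℝ) : ℝ :=
  Real.sqrt ((∫ x : ℝ, (u x) ^ 2) + energy u)

/-- A bounded symmetric bilinear form on `H¹(ℝ)`. -/
structure BddSymmBilinearForm where
  B : (ℝ → ℝ) → (ℝ → ℝ) → ℝ
  symm : ∀ u v, IsH1 u → IsH1 v → B u v = B v u
  add_left : ∀ u v w, IsH1 u → IsH1 v → IsH1 w → B (u + v) w = B u w + B v w
  smul_left : ∀ (c : ℝ) (u v : ℝ → ℝ), IsH1 u → IsH1 v → B (c • u) v = c * B u v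
  bounded : ∃ C : ℝ, ∀ u v, IsH1 u → IsH1 v → |B u v| ≤ C * h1Norm u * h1Norm v

/-- `I(u;V) = ∫_ℝ |u'(x)|² dx + V(u,u)` for a bounded symmetric bilinear form `V`. -/
noncomputable def IB (V : BddSymmBilinearForm) (u : ℝ → ℝ) : ℝ := energy u + V.B u u

/-- Membership in `K_a = { u ∈ H¹(ℝ) ; u(a) = ‖u‖_∞ = 1 }`. -/
def InKa (a : ℝ) (u : ℝ → ℝ) : Prop := IsH1 u ∧ u a = 1 ∧ supNorm u = 1

/-- `m(V) = inf { I(u;V)/‖u‖_∞² ; u ∈ H¹(ℝ), u ≢ 0 }`, as a value in `[-∞,∞)` (extended reals). -/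
noncomputable def mB (V : BddSymmBilinearForm) : EReal :=
  sInf {r : EReal | ∃ u : ℝ → ℝ, IsH1 u ∧ u ≠ 0 ∧
    r = ((IB V u / (supNorm u) ^ 2 : ℝ) : EReal)}

/-- `F(a;V) = inf { I(u;V) ; u ∈ K_a }`, as a value in `[-∞,∞)` (extended reals). -/
noncomputable def FB (V : BddSymmBilinearForm) (a : ℝ) : EReal :=
  sInf {r : EReal | ∃ u : ℝ → ℝ, InKa a u ∧ r = ((IB V u : ℝ) : EReal)}

lemma isH1_smul (c : ℝ) {u : ℝ → ℝ} (h : IsH1 u) : IsH1 (c • u) := by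
  obtain ⟨h1, h2, u', h3, h4⟩ := h
  refine ⟨h1.const_smul c, h2.const_smul c, c • u', h3.const_smul c, fun x => ?_⟩
  simp only [Pi.smul_apply, smul_eq_mul, intervalIntegral.integral_const_mul]
  rw [h4 x]; ring

lemma energy_smul (c : ℝ) (u : ℝ → ℝ) : energy (c • u) = c ^ 2 * energy u := by
  unfold energy
  rw [← integral_const_mul]
  congr 1
  ext x
  have : deriv (c • u) x = c * deriv u x := by
    have := deriv_const_mul_field (x := x) c (v := u)
    exact this
  rw [this]; ring

lemma IB_smul (V : BddSymmBilinearForm) (c : ℝ) {u : ℝ → ℝ} (h : IsH1 u) :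
    IB V (c • u) = c ^ 2 * IB V u := by
  unfold IB
  rw [energy_smul, V.smul_left c u (c • u) h (isH1_smul c h), V.symm u (c • u) h (isH1_smul c h),
    V.smul_left c u u h h]
  ring

lemma isH1_diff {u u' : ℝ → ℝ} (h3 : MemLp u' 2 (volume : Measure ℝ))
    (h4 : ∀ x : ℝ, u x = u 0 + ∫ t in (0:ℝ)..x, u' t) {s : ℝ} (hs : 0 < s) {x y : ℝ} (hxy : x ≤ y) :
    |u y - u x| ≤ s * (y - x) + (∫ t, (u' t) ^ 2) / s := by
  have hii : ∀ a b : ℝ, IntervalIntegrable u' volume a b := fun a b =>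
    (((h3.locallyIntegrable (by norm_num)).integrableOn_isCompact isCompact_uIcc).intervalIntegrable)
  have hsq : Integrable (fun t => (u' t) ^ 2) := h3.integrable_sq
  have e : u y - u x = ∫ t in x..y, u' t := by
    rw [h4 y, h4 x, ← intervalIntegral.integral_interval_sub_left (hii 0 y) (hii 0 x)]; ring
  rw [e]
  calc |∫ t in x..y, u' t| ≤ ∫ t in x..y, |u' t| :=
        intervalIntegral.abs_integral_le_integral_abs hxy
    _ ≤ ∫ t in x..y, (s + (u' t) ^ 2 / s) := by
        apply intervalIntegral.integral_mono_on hxy (hii x y).abs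
        · exact (intervalIntegrable_const).add (hsq.div_const s).intervalIntegrable
        · intro t _
          have : |u' t| * s ≤ (s + (u' t) ^ 2 / s) * s := by
            have : (s + (u' t) ^ 2 / s) * s = s ^ 2 + |u' t| ^ 2 := by
              rw [sq_abs]; field_simp
            nlinarith [sq_nonneg (s - |u' t|), abs_nonneg (u' t)]
          exact le_of_mul_le_mul_right this hs
    _ = s * (y - x) + (∫ t in x..y, (u' t) ^ 2) / s := by
        rw [intervalIntegral.integral_add intervalIntegrable_const
          (hsq.div_const s).intervalIntegrable, intervalIntegral.integral_div]
        simp; ring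
    _ ≤ _ := by
        gcongr
        rw [intervalIntegral.integral_of_le hxy]
        exact setIntegral_le_integral hsq (Eventually.of_forall fun t => sq_nonneg _)

lemma window_tendsto {f : ℝ → ℝ} (hf : Integrable f) (δ : ℝ) :
    Tendsto (fun x => ∫ t in x..(x + δ), f t) (cocompact ℝ) (𝓝 0) := by
  have hs : ∀ x, ∫ t in x..(x + δ), f t = (∫ t in (0:ℝ)..(x+δ), f t) - ∫ t in (0:ℝ)..x, f t :=
    fun x => (intervalIntegral.integral_interval_sub_left hf.intervalIntegrable
      hf.intervalIntegrable).symm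
  simp_rw [hs]
  rw [cocompact_eq_atBot_atTop, tendsto_sup]
  constructor
  · have h : Tendsto (fun x => ∫ t in (0:ℝ)..x, f t) atBot (𝓝 (-∫ t in Set.Iic 0, f t)) := by
      have := (intervalIntegral_tendsto_integral_Iic (0:ℝ) hf.integrableOn tendsto_id).neg
      refine this.congr fun x => ?_
      exact (intervalIntegral.integral_symm _ _).symm
    simpa using (h.comp (tendsto_atBot_add_const_right _ δ tendsto_id)).sub h
  · have h : Tendsto (fun x => ∫ t in (0:ℝ)..x, f t) atTop (𝓝 (∫ t in Set.Ioi 0, f t)) :=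
      intervalIntegral_tendsto_integral_Ioi (0:ℝ) hf.integrableOn tendsto_id
    simpa using (h.comp (tendsto_atTop_add_const_right _ δ tendsto_id)).sub h

lemma isH1_tendsto {u : ℝ → ℝ} (h : IsH1 u) :
    Tendsto (fun x => |u x|) (cocompact ℝ) (𝓝 0) := by
  obtain ⟨h1, h2, u', h3, h4⟩ := h
  have hE : 0 ≤ ∫ t, (u' t) ^ 2 := integral_nonneg fun t => sq_nonneg _
  have hsq : Integrable (fun t => (u t) ^ 2) := h2.integrable_sq
  rw [Metric.tendsto_nhds]
  intro ε hε
  set E := ∫ t, (u' t) ^ 2 with hEdef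
  obtain ⟨s, hs, hsE⟩ : ∃ s : ℝ, 0 < s ∧ E / s ≤ ε / 4 := by
    refine ⟨4 * (E + 1) / ε, by positivity, ?_⟩
    rw [div_le_iff₀ (by positivity)]
    have : ε / 4 * (4 * (E + 1) / ε) = E + 1 := by field_simp
    linarith
  obtain ⟨δ, hδ, hδs⟩ : ∃ δ : ℝ, 0 < δ ∧ s * δ ≤ ε / 4 :=
    ⟨ε / 4 / s, by positivity, le_of_eq (by field_simp)⟩
  have hw := (window_tendsto hsq δ).eventually (gt_mem_nhds (show 0 < δ * (ε / 2) ^ 2 by positivity))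
  filter_upwards [hw] with x hx
  rw [Real.dist_eq, sub_zero, abs_abs]
  by_contra hcon
  push Not at hcon
  have : δ * (ε / 2) ^ 2 ≤ ∫ t in x..(x + δ), (u t) ^ 2 := by
    have e : δ * (ε / 2) ^ 2 = ∫ t in x..(x + δ), (ε / 2) ^ 2 := by simp
    rw [e]
    apply intervalIntegral.integral_mono_on (by linarith) intervalIntegrable_const
      hsq.intervalIntegrable
    intro t ht
    have hd := isH1_diff h3 h4 hs ht.1
    have h5 : s * (t - x) ≤ s * δ := by gcongr; linarith [ht.2]
    have h6 : |u x| - |u t| ≤ |u t - u x| := by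
      rw [abs_sub_comm]; exact abs_sub_abs_le_abs_sub _ _
    rw [← sq_abs (u t)]
    have : ε / 2 ≤ |u t| := by linarith
    gcongr
  linarith

lemma isH1_max {u : ℝ → ℝ} (h : IsH1 u) (h0 : u ≠ 0) :
    ∃ a, u a ≠ 0 ∧ supNorm u = |u a| ∧ ∀ x, |u x| ≤ |u a| := by
  obtain ⟨b, hb⟩ := Function.ne_iff.1 h0
  have hb' : 0 < |u b| := abs_pos.2 hb
  obtain ⟨a, ha⟩ := h.1.abs.exists_forall_ge' b
    (((isH1_tendsto h).eventually (gt_mem_nhds hb')).mono fun x hx => hx.le)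
  refine ⟨a, abs_pos.1 (hb'.trans_le (ha b)), ?_, ha⟩
  exact le_antisymm (ciSup_le ha) (le_ciSup (f := fun x => |u x|) ⟨|u a|, by rintro _ ⟨x, rfl⟩; exact ha x⟩ a)

lemma supNorm_smul (c : ℝ) (u : ℝ → ℝ) : supNorm (c • u) = |c| * supNorm u := by
  unfold supNorm
  rw [Real.mul_iSup_of_nonneg (abs_nonneg c)]
  simp [abs_mul]

/-- **Decomposition principle.** For any bounded symmetric bilinear form `V` on `H¹(ℝ)`,
`m(V) = inf_{a ∈ ℝ} F(a;V)` (both sides taken in `[-∞,∞)`). -/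
theorem decomposition_principle (V : BddSymmBilinearForm) :
    mB V = ⨅ a : ℝ, FB V a := by
  apply le_antisymm
  · refine le_iInf fun a => le_sInf ?_
    rintro r ⟨u, ⟨hu, ha, hn⟩, rfl⟩
    refine sInf_le ⟨u, hu, ?_, by rw [hn]; simp⟩
    rintro rfl
    simp at ha
  · refine le_sInf ?_
    rintro r ⟨u, hu, h0, rfl⟩
    obtain ⟨a, ha, hn, -⟩ := isH1_max hu h0
    refine (iInf_le _ a).trans (sInf_le ⟨(u a)⁻¹ • u, ⟨isH1_smul _ hu, ?_, ?_⟩, ?_⟩)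
    · simp [ha]
    · rw [supNorm_smul, hn, abs_inv]
      exact inv_mul_cancel₀ (abs_ne_zero.2 ha)
    · rw [IB_smul V _ hu, hn, sq_abs, inv_pow, div_eq_inv_mul]
end

section
/- Let V ∈ L^∞(ℝ) with v₀ := ess inf_{x∈ℝ} V(x) > 0, and fix a ∈ ℝ. Then there exists a unique minimizer u_a ∈ K_a of the functional u ↦ ‖u‖_V² over K_a, i.e., u_a ∈ K_a satisfies ‖u_a‖_V² = inf{ ‖u‖_V² : u ∈ K_a }, and any other element of K_a attaining this infimum equals u_a. -/
open MeasureTheory Filter Real Topology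

/-- `I(u;V) = ∫_ℝ (|u'(x)|² + V(x)|u(x)|²) dx` for a potential `V : ℝ → ℝ`. -/
noncomputable def IV (V : ℝ → ℝ) (u : ℝ → ℝ) : ℝ :=
  ∫ x : ℝ, ((deriv u x) ^ 2 + V x * (u x) ^ 2)

/-- `F(a;V) = inf { I(u;V) ; u ∈ K_a }`. -/
noncomputable def FV (V : ℝ → ℝ) (a : ℝ) : ℝ :=
  sInf {r : ℝ | ∃ u : ℝ → ℝ, InKa a u ∧ r = IV V u}

/-- `m(V) = inf { I(u;V)/‖u‖_∞² ; u ∈ H¹(ℝ), u ≢ 0 }`. -/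
noncomputable def mV (V : ℝ → ℝ) : ℝ :=
  sInf {r : ℝ | ∃ u : ℝ → ℝ, IsH1 u ∧ u ≠ 0 ∧ r = IV V u / (supNorm u) ^ 2}

noncomputable abbrev L2R := Lp ℝ 2 (volume : Measure ℝ)
noncomputable abbrev EE := WithLp 2 (L2R × L2R)

lemma ii_of_memLp {g : ℝ → ℝ} (hg : MemLp g 2 (volume : Measure ℝ)) (x y : ℝ) :
    IntervalIntegrable g volume x y :=
  intervalIntegrable_iff.mpr <|
    ((hg.locallyIntegrable (by norm_num)).integrableOn_isCompact isCompact_uIcc).mono_set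
      Set.uIoc_subset_uIcc

lemma exists_T (a x : ℝ) : ∃ L : L2R →L[ℝ] ℝ, ∀ g : L2R, L g = ∫ t in a..x, g t := by
  refine ⟨innerSL ℝ (indicatorConstLp 2 (measurableSet_Ioc (a := a) (b := x)) (by simp) (1:ℝ))
    - innerSL ℝ (indicatorConstLp 2 (measurableSet_Ioc (a := x) (b := a)) (by simp) (1:ℝ)), ?_⟩
  intro g
  simp only [sub_apply, innerSL_apply_apply, intervalIntegral]
  rw [L2.inner_indicatorConstLp_one, L2.inner_indicatorConstLp_one]

lemma deriv_ae {g : ℝ → ℝ} (hg : MemLp g 2 (volume : Measure ℝ)) (a c : ℝ) :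
    ∀ᵐ x, deriv (fun x => c + ∫ t in a..x, g t) x = g x := by
  filter_upwards [LocallyIntegrable.ae_hasDerivAt_integral (hg.locallyIntegrable (by norm_num))] with x hx
  exact ((hx a).const_add c).deriv

lemma norm_sq_L2R (f : L2R) : ‖f‖ ^ 2 = ∫ x, (f x) ^ 2 := by
  rw [← real_inner_self_eq_norm_sq, L2.inner_def]
  congr 1
  ext x
  simp [pow_two]

lemma supNorm_iff {u : ℝ → ℝ} {a : ℝ} (ha : u a = 1) :
    supNorm u = 1 ↔ ∀ x, |u x| ≤ 1 := by
  constructor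
  · intro h x
    by_cases hb : BddAbove (Set.range fun x => |u x|)
    · rw [← h]; exact le_ciSup hb x
    · rw [supNorm, Real.iSup_of_not_bddAbove hb] at h
      norm_num at h
  · intro h
    apply le_antisymm (ciSup_le h)
    have hb : BddAbove (Set.range fun x => |u x|) := ⟨1, by rintro _ ⟨x, rfl⟩; exact h x⟩
    have := le_ciSup hb a
    simpa [ha] using this

/-- The image of `K_a` in the Hilbert space. -/
def CC (w : ℝ → ℝ) (a : ℝ) : Set EE :=
  {p | (∀ x, |1 + ∫ t in a..x, p.snd t| ≤ 1) ∧
    ∀ᵐ x, p.fst x = w x * (1 + ∫ t in a..x, p.snd t)}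

lemma CC_convex (w : ℝ → ℝ) (a : ℝ) : Convex ℝ (CC w a) := by
  intro p hp q hq s t hs ht hst
  have key : ∀ x, 1 + ∫ y in a..x, (s • p + t • q).snd y =
      s * (1 + ∫ y in a..x, p.snd y) + t * (1 + ∫ y in a..x, q.snd y) := by
    intro x
    obtain ⟨L, hL⟩ := exists_T a x
    rw [← hL, ← hL, ← hL, WithLp.add_snd, WithLp.smul_snd, WithLp.smul_snd, map_add, map_smul,
      map_smul]
    simp only [smul_eq_mul]
    linear_combination -hst
  refine ⟨fun x => ?_, ?_⟩
  · rw [key x]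
    have h1 := abs_le.1 (hp.1 x)
    have h2 := abs_le.1 (hq.1 x)
    rw [abs_le]
    constructor <;> nlinarith
  · have h1 : (s • p + t • q).fst =ᵐ[volume] fun x => s * p.fst x + t * q.fst x := by
      rw [WithLp.add_fst, WithLp.smul_fst, WithLp.smul_fst]
      filter_upwards [Lp.coeFn_add (s • p.fst) (t • q.fst), Lp.coeFn_smul s p.fst,
        Lp.coeFn_smul t q.fst] with x h1 h2 h3
      rw [h1, Pi.add_apply, h2, h3]
      simp
    filter_upwards [h1, hp.2, hq.2] with x h1 h2 h3
    rw [h1, key x, h2, h3]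
    ring

lemma CC_closed (w : ℝ → ℝ) (a : ℝ) : IsClosed (CC w a) := by
  apply IsSeqClosed.isClosed
  intro p q hp hpq
  have h1 : Tendsto (fun n => (p n).fst) atTop (𝓝 q.fst) :=
    ((WithLp.prod_continuous_ofLp 2 L2R L2R).fst.tendsto q).comp hpq
  have h2 : Tendsto (fun n => (p n).snd) atTop (𝓝 q.snd) :=
    ((WithLp.prod_continuous_ofLp 2 L2R L2R).snd.tendsto q).comp hpq
  have key : ∀ x, Tendsto (fun n => 1 + ∫ t in a..x, (p n).snd t) atTop
      (𝓝 (1 + ∫ t in a..x, q.snd t)) := by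
    intro x
    obtain ⟨L, hL⟩ := exists_T a x
    simp only [← hL]
    exact ((L.continuous.tendsto _).comp h2).const_add 1
  refine ⟨fun x => le_of_tendsto' (key x).abs fun n => (hp n).1 x, ?_⟩
  obtain ⟨φ, hφ, hae⟩ := (tendstoInMeasure_of_tendsto_Lp h1).exists_seq_tendsto_ae
  have hall : ∀ᵐ x, ∀ n, (p n).fst x = w x * (1 + ∫ t in a..x, (p n).snd t) :=
    ae_all_iff.2 fun n => (hp n).2
  filter_upwards [hae, hall] with x hx hxn
  refine tendsto_nhds_unique hx ?_
  simp only [hxn]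
  exact ((key x).comp hφ.tendsto_atTop).const_mul (w x)

/-- A convenient element of `K_a`. -/
lemma exists_InKa (a : ℝ) : ∃ u, InKa a u := by
  have hi : Integrable (fun x : ℝ => (1 + (x - a) ^ 2)⁻¹) :=
    integrable_inv_one_add_sq.comp_sub_right a
  have hpos : ∀ x : ℝ, 0 < 1 + (x - a) ^ 2 := fun x => by positivity
  have hone : ∀ x : ℝ, (1 + (x - a) ^ 2)⁻¹ ≤ 1 := fun x =>
    inv_le_one_of_one_le₀ (by nlinarith [sq_nonneg (x - a)])
  have hinv : ∀ x : ℝ, 0 < (1 + (x - a) ^ 2)⁻¹ := fun x => inv_pos.2 (hpos x)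
  have hc : Continuous (fun x : ℝ => (1 + (x - a) ^ 2)⁻¹) :=
    Continuous.inv₀ (by fun_prop) fun x => (hpos x).ne'
  have hc' : Continuous (fun x : ℝ => -(2 * (x - a)) / (1 + (x - a) ^ 2) ^ 2) :=
    Continuous.div (by fun_prop) (by fun_prop) fun x => (pow_pos (hpos x) 2).ne'
  refine ⟨fun x => (1 + (x - a) ^ 2)⁻¹, ⟨hc, ?_, fun x => -(2 * (x - a)) / (1 + (x - a) ^ 2) ^ 2,
    ?_, ?_⟩, by simp, (supNorm_iff (a := a) (by simp)).2 ?_⟩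
  · rw [memLp_two_iff_integrable_sq hc.aestronglyMeasurable]
    refine hi.mono' (hc.pow 2).aestronglyMeasurable (ae_of_all _ fun x => ?_)
    rw [Real.norm_eq_abs, abs_of_nonneg (sq_nonneg _)]
    nlinarith [hone x, hinv x]
  · rw [memLp_two_iff_integrable_sq hc'.aestronglyMeasurable]
    refine hi.mono' (hc'.pow 2).aestronglyMeasurable (ae_of_all _ fun x => ?_)
    rw [Real.norm_eq_abs, abs_of_nonneg (sq_nonneg _), div_pow, inv_eq_one_div,
      div_le_div_iff₀ (by have := hpos x; positivity) (hpos x)]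
    generalize x - a = y
    nlinarith [sq_nonneg (y ^ 2), sq_nonneg (1 - y ^ 2), sq_nonneg y, sq_nonneg (y * y ^ 2),
      sq_nonneg (y^4), mul_nonneg (sq_nonneg y) (sq_nonneg (1 - y ^ 2))]
  · intro x
    rw [intervalIntegral.integral_eq_sub_of_hasDerivAt (f := fun x => (1 + (x - a) ^ 2)⁻¹)]
    · ring
    · intro y _
      have h1 : HasDerivAt (fun x : ℝ => 1 + (x - a) ^ 2) (2 * (y - a)) y := by
        simpa using (((hasDerivAt_id y).sub_const a).pow 2).const_add 1
      exact h1.inv (hpos y).ne'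
    · exact hc'.intervalIntegrable _ _
  · intro x
    rw [abs_of_pos (hinv x)]
    exact hone x

/-- The properties of the weight `w = √V`. -/
lemma weight (V : ℝ → ℝ) (hV : MemLp V ⊤ (volume : Measure ℝ))
    (hpos : 0 < essInf V (volume : Measure ℝ)) :
    ∃ w : ℝ → ℝ, ∃ c M : ℝ, 0 < c ∧ AEStronglyMeasurable w volume ∧
      ∀ᵐ x, V x = w x ^ 2 ∧ c ≤ w x ∧ w x ≤ M := by
  have hM : ∀ᵐ x, |V x| ≤ (eLpNormEssSup V volume).toReal := by
    have hfin : eLpNormEssSup V volume ≠ ⊤ := by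
      have := hV.2.ne
      rwa [eLpNorm_exponent_top] at this
    filter_upwards [ae_le_eLpNormEssSup (f := V) (μ := volume)] with x hx
    have := ENNReal.toReal_mono hfin hx
    simpa using this
  have hb : IsBoundedUnder (· ≥ ·) (ae (volume : Measure ℝ)) V :=
    ⟨-(eLpNormEssSup V volume).toReal, by
      rw [eventually_map]
      filter_upwards [hM] with x hx
      exact (abs_le.1 hx).1⟩
  have hl : ∀ᵐ x, essInf V volume ≤ V x := ae_essInf_le hb
  refine ⟨fun x => √(V x), √(essInf V volume), √(eLpNormEssSup V volume).toReal,
    Real.sqrt_pos.2 hpos, Real.continuous_sqrt.comp_aestronglyMeasurable hV.1, ?_⟩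
  filter_upwards [hM, hl] with x h1 h2
  exact ⟨(Real.sq_sqrt (by linarith)).symm, Real.sqrt_le_sqrt h2,
    Real.sqrt_le_sqrt (abs_le.1 h1).2⟩

lemma of_CC {V w : ℝ → ℝ} {c M a : ℝ} (hc : 0 < c)
    (hw : ∀ᵐ x, V x = w x ^ 2 ∧ c ≤ w x ∧ w x ≤ M) {p : EE} (hp : p ∈ CC w a) :
    InKa a (fun x => 1 + ∫ t in a..x, p.snd t) := by
  have hg := Lp.memLp p.snd
  have hcont : Continuous (fun x => 1 + ∫ t in a..x, p.snd t) :=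
    continuous_const.add (intervalIntegral.continuous_primitive (fun x y => ii_of_memLp hg x y) a)
  refine ⟨⟨hcont, ?_, p.snd, hg, ?_⟩, by simp, (supNorm_iff (a := a) (by simp)).2 hp.1⟩
  · refine (Lp.memLp p.fst).of_le_mul (c := c⁻¹) hcont.aestronglyMeasurable ?_
    filter_upwards [hp.2, hw] with x h1 h2
    rw [h1, norm_mul, ← mul_assoc]
    have h3 : 1 ≤ c⁻¹ * ‖w x‖ := by
      rw [inv_mul_eq_div, le_div_iff₀ hc, one_mul]
      exact h2.2.1.trans (le_abs_self _)
    exact le_mul_of_one_le_left (norm_nonneg _) h3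
  · intro x
    have := intervalIntegral.integral_add_adjacent_intervals (ii_of_memLp hg a 0)
      (ii_of_memLp hg 0 x)
    linarith

lemma IV_CC {V w : ℝ → ℝ} {c M a : ℝ}
    (hw : ∀ᵐ x, V x = w x ^ 2 ∧ c ≤ w x ∧ w x ≤ M) {p : EE} (hp : p ∈ CC w a) :
    IV V (fun x => 1 + ∫ t in a..x, p.snd t) = ‖p‖ ^ 2 := by
  have hg := Lp.memLp p.snd
  have hf := Lp.memLp p.fst
  rw [WithLp.prod_norm_sq_eq_of_L2, norm_sq_L2R, norm_sq_L2R, add_comm,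
    ← integral_add hg.integrable_sq hf.integrable_sq]
  apply integral_congr_ae
  filter_upwards [hw, hp.2, deriv_ae hg a 1] with x h1 h2 h3
  rw [h3, h2, h1.1]
  ring

lemma to_CC {V w : ℝ → ℝ} {c M a : ℝ} (hc : 0 < c) (hwm : AEStronglyMeasurable w volume)
    (hw : ∀ᵐ x, V x = w x ^ 2 ∧ c ≤ w x ∧ w x ≤ M) {u : ℝ → ℝ} (hu : InKa a u) :
    ∃ p ∈ CC w a, u = (fun x => 1 + ∫ t in a..x, p.snd t) := by
  obtain ⟨⟨hcont, h2, g, hg, hug⟩, ha, hs⟩ := hu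
  have hwu : MemLp (fun x => w x * u x) 2 volume := by
    refine h2.of_le_mul (c := M) (hwm.mul hcont.aestronglyMeasurable) ?_
    filter_upwards [hw] with x hx
    rw [norm_mul, Real.norm_eq_abs, abs_of_nonneg (hc.le.trans hx.2.1)]
    exact mul_le_mul_of_nonneg_right hx.2.2 (norm_nonneg _)
  have hrep : u = (fun x => 1 + ∫ t in a..x, hg.toLp g t) := by
    ext x
    have h3 : ∫ t in a..x, hg.toLp g t = ∫ t in a..x, g t :=
      intervalIntegral.integral_congr_ae (hg.coeFn_toLp.mono fun t ht _ => ht)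
    have := intervalIntegral.integral_add_adjacent_intervals (ii_of_memLp hg 0 a)
      (ii_of_memLp hg a x)
    have h4 := hug x
    have h5 := hug a
    rw [h3]
    linarith
  refine ⟨WithLp.toLp 2 (hwu.toLp _, hg.toLp g), ⟨?_, ?_⟩, hrep⟩
  · intro x
    have := (supNorm_iff ha).1 hs x
    rw [hrep] at this
    exact this
  · filter_upwards [hwu.coeFn_toLp] with x hx
    have := congrFun hrep x
    rw [WithLp.toLp_fst, WithLp.toLp_snd, hx, ← this]

/-- **Existence and uniqueness of the minimizer in `K_a`.**
For `V ∈ L^∞(ℝ)` with `ess inf V > 0` and any `a ∈ ℝ`, there is a unique `u_a ∈ K_a`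
with `‖u_a‖_V² = inf { ‖u‖_V² ; u ∈ K_a }`; any element of `K_a` attaining the
infimum equals `u_a`.  (Here `‖u‖_V² = I(u;V)`.) -/
theorem exists_unique_minimizer (V : ℝ → ℝ) (hV : MemLp V ⊤ (volume : Measure ℝ))
    (hpos : 0 < essInf V (volume : Measure ℝ)) (a : ℝ) :
    ∃ ua : ℝ → ℝ, InKa a ua ∧
      IV V ua = sInf {r : ℝ | ∃ u : ℝ → ℝ, InKa a u ∧ r = IV V u} ∧
      ∀ v : ℝ → ℝ, InKa a v →
        IV V v = sInf {r : ℝ | ∃ u : ℝ → ℝ, InKa a u ∧ r = IV V u} → v = ua := by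
  obtain ⟨w, c, M, hc, hwm, hw⟩ := weight V hV hpos
  have hne : (CC w a).Nonempty := by
    obtain ⟨u, hu⟩ := exists_InKa a
    obtain ⟨p, hp, -⟩ := to_CC hc hwm hw hu
    exact ⟨p, hp⟩
  obtain ⟨p, hp, hmin⟩ := exists_norm_eq_iInf_of_complete_convex hne (CC_closed w a).isComplete
    (CC_convex w a) 0
  have hle : ∀ q ∈ CC w a, ‖p‖ ≤ ‖q‖ := by
    intro q hq
    have h := ciInf_le (f := fun r : CC w a => ‖(0 : EE) - r‖)
      ⟨0, by rintro _ ⟨r, rfl⟩; exact norm_nonneg _⟩ ⟨q, hq⟩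
    rw [← hmin] at h
    simpa using h
  have hinf : sInf {r : ℝ | ∃ u : ℝ → ℝ, InKa a u ∧ r = IV V u} = ‖p‖ ^ 2 := by
    apply IsLeast.csInf_eq
    refine ⟨⟨_, of_CC hc hw hp, (IV_CC hw hp).symm⟩, ?_⟩
    rintro _ ⟨u, hu, rfl⟩
    obtain ⟨q, hq, rfl⟩ := to_CC hc hwm hw hu
    rw [IV_CC hw hq]
    exact pow_le_pow_left₀ (norm_nonneg _) (hle q hq) 2
  refine ⟨_, of_CC hc hw hp, by rw [hinf, IV_CC hw hp], ?_⟩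
  intro v hv hvm
  obtain ⟨q, hq, rfl⟩ := to_CC hc hwm hw hv
  rw [hinf, IV_CC hw hq] at hvm
  have hpq : q = p := by
    have hm := hle _ (CC_convex w a hp hq (by norm_num : (0:ℝ) ≤ 1/2)
      (by norm_num : (0:ℝ) ≤ 1/2) (by norm_num))
    rw [← smul_add, norm_smul] at hm
    have hpar := parallelogram_law_with_norm ℝ p q
    have h0 : ‖p - q‖ ^ 2 ≤ 0 := by
      norm_num at hm
      nlinarith [norm_nonneg p, norm_nonneg (p + q)]
    have h1 : ‖p - q‖ = 0 := by
      have := norm_nonneg (p - q)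
      nlinarith
    exact (sub_eq_zero.1 (norm_eq_zero.1 h1)).symm
  rw [hpq]
end

section
/- Let V ∈ L^∞(ℝ) with v₀ := ess inf_{x∈ℝ} V(x) > 0, fix a ∈ ℝ, and let u_a ∈ K_a be the unique minimizer of u ↦ ‖u‖_V² over K_a. Then u_a ∈ W^{2,∞}(ℝ∖{a}) and u_a″(x) = V(x) u_a(x) for almost every x ∈ ℝ∖{a}. -/
open MeasureTheory Filter Real Topology

lemma h1_ac_int {g : ℝ → ℝ} (hg : LocallyIntegrable g (volume : Measure ℝ)) (c p q : ℝ) :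
    AbsolutelyContinuousOnInterval (fun x => ∫ t in c..x, g t) p q := by
  have hi : ∀ x y, IntervalIntegrable g volume x y := fun x y =>
    (hg.integrableOn_isCompact isCompact_uIcc).intervalIntegrable
  have := (hi (min c (min p q)) (max c (max p q))).absolutelyContinuousOnInterval_intervalIntegral
    (c := c) (by rw [Set.uIcc_of_le (by simp)]; simp)
  refine this.mono ?_
  intro x hx
  rw [Set.uIcc_of_le (by simp)]
  rw [Set.mem_uIcc] at hx
  simp only [Set.mem_Icc, min_le_iff, le_max_iff]
  tauto

lemma h1_ac {u : ℝ → ℝ} (hu : IsH1 u) (p q : ℝ) : AbsolutelyContinuousOnInterval u p q := by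
  obtain ⟨hc, hm, g, hg, hug⟩ := hu
  have hl : LocallyIntegrable g (volume : Measure ℝ) := hg.locallyIntegrable (by norm_num)
  have h1 := h1_ac_int hl 0 p q
  have h2 : AbsolutelyContinuousOnInterval (fun _ : ℝ => u 0) p q :=
    (LipschitzWith.const (u 0)).lipschitzOnWith.absolutelyContinuousOnInterval (K := 0)
  have := h2.add h1
  have e : u = (fun _ : ℝ => u 0) + (fun x => ∫ t in (0:ℝ)..x, g t) := by
    funext x; exact hug x
  rw [e]; exact this

lemma h1_deriv {u : ℝ → ℝ} (hu : IsH1 u) :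
    MemLp (deriv u) 2 (volume : Measure ℝ) ∧ ∀ᵐ x : ℝ, DifferentiableAt ℝ u x := by
  obtain ⟨hc, hm, g, hg, hug⟩ := hu
  have hl : LocallyIntegrable g (volume : Measure ℝ) := hg.locallyIntegrable (by norm_num)
  have h : ∀ᵐ x : ℝ, HasDerivAt u (g x) x := by
    filter_upwards [_root_.LocallyIntegrable.ae_hasDerivAt_integral hl] with x hx
    have := (hx 0).const_add (u 0)
    exact this.congr_of_eventuallyEq (Eventually.of_forall hug)
  constructor
  · refine (memLp_congr_ae ?_).1 hg
    filter_upwards [h] with x hx using hx.deriv.symm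
  · filter_upwards [h] with x hx using hx.differentiableAt

lemma h1_mk {u : ℝ → ℝ} (hc : Continuous u) (hm : MemLp u 2 (volume : Measure ℝ))
    (hd : MemLp (deriv u) 2 (volume : Measure ℝ))
    (hac : ∀ p q, AbsolutelyContinuousOnInterval u p q) : IsH1 u := by
  refine ⟨hc, hm, deriv u, hd, fun x => ?_⟩
  rw [(hac 0 x).integral_deriv_eq_sub]; ring

/-- truncation -/
noncomputable def clip1 (t : ℝ) : ℝ := max (-1) (min 1 t)

lemma clip1_lip (s t : ℝ) : |clip1 s - clip1 t| ≤ |s - t| := by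
  unfold clip1
  rw [abs_le]
  rcases abs_cases (s - t) with h | h <;> constructor <;>
  rcases max_cases (-1:ℝ) (min 1 s) with h1 | h1 <;> rcases max_cases (-1:ℝ) (min 1 t) with h2 | h2 <;>
  rcases min_cases (1:ℝ) s with h3 | h3 <;> rcases min_cases (1:ℝ) t with h4 | h4 <;> linarith

lemma clip1_abs (s : ℝ) : |clip1 s| ≤ |s| := by
  have := clip1_lip s 0
  have h : clip1 0 = 0 := by simp [clip1]
  simpa [h] using this

lemma clip1_le (s : ℝ) : |clip1 s| ≤ 1 := by
  unfold clip1
  rw [abs_le]; constructor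
  · simp
  · simp

lemma clip1_deriv {w : ℝ → ℝ} {x : ℝ} (hw : DifferentiableAt ℝ w x) :
    |deriv (fun y => clip1 (w y)) x| ≤ |deriv w x| := by
  by_cases hd : DifferentiableAt ℝ (fun y => clip1 (w y)) x
  · have h1 := (hasDerivAt_iff_tendsto_slope.1 hd.hasDerivAt).abs
    have h2 := (hasDerivAt_iff_tendsto_slope.1 hw.hasDerivAt).abs
    refine le_of_tendsto_of_tendsto' h1 h2 fun y => ?_
    simp only [slope_def_field, abs_div]
    exact div_le_div_of_nonneg_right (clip1_lip _ _) (abs_nonneg _)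
  · rw [deriv_zero_of_not_differentiableAt hd]; simp

lemma clip1_h1 {w : ℝ → ℝ} (hw : IsH1 w) : IsH1 (fun y => clip1 (w y)) := by
  obtain ⟨hd, hdiff⟩ := h1_deriv hw
  have hc : Continuous (fun y => clip1 (w y)) := by
    have := hw.1
    unfold clip1; fun_prop
  refine h1_mk hc ?_ ?_ ?_
  · exact hw.2.1.of_le hc.aestronglyMeasurable (Eventually.of_forall fun x => by
      simpa using clip1_abs (w x))
  · refine hd.of_le (measurable_deriv _).aestronglyMeasurable ?_
    filter_upwards [hdiff] with x hx
    simpa using clip1_deriv hx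
  · intro p q
    have h := h1_ac hw p q
    rw [absolutelyContinuousOnInterval_iff] at h ⊢
    intro ε hε
    obtain ⟨δ, hδ, H⟩ := h ε hε
    refine ⟨δ, hδ, fun E hE hs => lt_of_le_of_lt ?_ (H E hE hs)⟩
    refine Finset.sum_le_sum fun i _ => ?_
    simp only [Real.dist_eq]
    exact clip1_lip _ _

lemma vbound {V : ℝ → ℝ} (hV : MemLp V ⊤ (volume : Measure ℝ)) :
    ∃ M : ℝ, ∀ᵐ x : ℝ, ‖V x‖ ≤ M := by
  have h2 := hV.2
  rw [eLpNorm_exponent_top] at h2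
  refine ⟨(eLpNormEssSup V volume).toReal, ?_⟩
  filter_upwards [ae_le_eLpNormEssSup (f := V) (μ := volume)] with x hx
  rw [← toReal_enorm]
  exact ENNReal.toReal_mono h2.ne hx

lemma vint {V f g : ℝ → ℝ} (hV : MemLp V ⊤ (volume : Measure ℝ))
    (hf : MemLp f 2 (volume : Measure ℝ)) (hg : MemLp g 2 (volume : Measure ℝ)) :
    Integrable (fun x => V x * (f x * g x)) (volume : Measure ℝ) := by
  have h1 : Integrable (fun x => f x * g x) (volume : Measure ℝ) := hf.integrable_mul hg
  obtain ⟨M, hM⟩ := vbound hV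
  exact h1.bdd_mul hV.1 hM

lemma h1_add {u φ : ℝ → ℝ} (hu : IsH1 u) (hφ : IsH1 φ) (ε : ℝ) :
    IsH1 (fun x => u x + ε * φ x) ∧
    ∀ᵐ x : ℝ, deriv (fun x => u x + ε * φ x) x = deriv u x + ε * deriv φ x := by
  obtain ⟨hd, hdiff⟩ := h1_deriv hu
  obtain ⟨hd', hdiff'⟩ := h1_deriv hφ
  have hde : ∀ᵐ x : ℝ, deriv (fun x => u x + ε * φ x) x = deriv u x + ε * deriv φ x := by
    filter_upwards [hdiff, hdiff'] with x h1 h2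
    exact (h1.hasDerivAt.add (h2.hasDerivAt.const_mul ε)).deriv
  refine ⟨h1_mk ?_ ?_ ?_ ?_, hde⟩
  · exact hu.1.add (hφ.1.const_mul ε)
  · exact hu.2.1.add (hφ.2.1.const_mul ε)
  · exact (memLp_congr_ae hde).2 (hd.add (hd'.const_mul ε))
  · intro p q
    exact (h1_ac hu p q).add ((h1_ac hφ p q).const_mul ε)

lemma iv_int {V u : ℝ → ℝ} (hV : MemLp V ⊤ (volume : Measure ℝ)) (hu : IsH1 u) :
    Integrable (fun x => (deriv u x) ^ 2 + V x * (u x) ^ 2) (volume : Measure ℝ) := by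
  have h := vint hV hu.2.1 hu.2.1
  have h2 := (h1_deriv hu).1.integrable_sq
  refine (h2.add h).congr (Eventually.of_forall fun x => ?_)
  simp only [Pi.add_apply]; ring

lemma iv_clip {V w : ℝ → ℝ} (hV : MemLp V ⊤ (volume : Measure ℝ)) (h0 : ∀ᵐ x : ℝ, 0 ≤ V x)
    (hw : IsH1 w) : IV V (fun y => clip1 (w y)) ≤ IV V w := by
  unfold IV
  refine integral_mono_ae (iv_int hV (clip1_h1 hw)) (iv_int hV hw) ?_
  filter_upwards [h0, (h1_deriv hw).2] with x hx hd
  have h1 := sq_le_sq.2 (clip1_deriv hd)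
  have h2 := sq_le_sq.2 (clip1_abs (w x))
  have := mul_le_mul_of_nonneg_left h2 hx
  linarith

lemma ka_clip {a : ℝ} {w : ℝ → ℝ} (hw : IsH1 w) (ha : w a = 1) :
    InKa a (fun y => clip1 (w y)) := by
  have h1 : clip1 (w a) = 1 := by rw [ha]; simp [clip1]
  refine ⟨clip1_h1 hw, h1, ?_⟩
  unfold supNorm
  apply le_antisymm
  · exact ciSup_le fun x => clip1_le _
  · have hb : BddAbove (Set.range fun x => |clip1 (w x)|) :=
      ⟨1, by rintro _ ⟨x, rfl⟩; exact clip1_le _⟩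
    have := le_ciSup hb a
    simpa [h1] using this

lemma quad_zero {B C : ℝ} (h : ∀ ε : ℝ, 0 ≤ 2 * ε * B + ε ^ 2 * C) : B = 0 := by
  have hC : 0 ≤ C := by nlinarith [h 1, h (-1)]
  have h1 := h (-B / (C + 1))
  have hp : 0 < C + 1 := by linarith
  have e : 2 * (-B / (C + 1)) * B + (-B / (C + 1)) ^ 2 * C = - (B ^ 2 * (C + 2)) / (C + 1) ^ 2 := by
    field_simp; ring
  rw [e, le_div_iff₀ (by positivity)] at h1
  have : B ^ 2 ≤ 0 := by nlinarith [sq_nonneg B, mul_nonneg (sq_nonneg B) hC]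
  exact pow_eq_zero_iff (two_ne_zero) |>.1 (le_antisymm this (sq_nonneg B))

lemma euler {V : ℝ → ℝ} (hV : MemLp V ⊤ (volume : Measure ℝ)) (h0 : ∀ᵐ x : ℝ, 0 ≤ V x)
    {a : ℝ} {u : ℝ → ℝ} (hua : InKa a u) (hmin : ∀ w : ℝ → ℝ, InKa a w → IV V u ≤ IV V w)
    {φ : ℝ → ℝ} (hφ : IsH1 φ) (hφa : φ a = 0) :
    ∫ x : ℝ, (deriv u x * deriv φ x + V x * (u x * φ x)) = 0 := by
  obtain ⟨hu, hu1, -⟩ := hua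
  refine quad_zero (C := IV V φ) fun ε => ?_
  obtain ⟨hw, hwd⟩ := h1_add hu hφ ε
  have hle : IV V u ≤ IV V (fun x => u x + ε * φ x) :=
    (hmin _ (ka_clip hw (by simp [hu1, hφa]))).trans (iv_clip hV h0 hw)
  have hB : Integrable (fun x => deriv u x * deriv φ x + V x * (u x * φ x))
      (volume : Measure ℝ) :=
    ((h1_deriv hu).1.integrable_mul (h1_deriv hφ).1).add (vint hV hu.2.1 hφ.2.1)
  have e : IV V (fun x => u x + ε * φ x) = IV V u +
      (2 * ε * (∫ x : ℝ, (deriv u x * deriv φ x + V x * (u x * φ x))) + ε ^ 2 * IV V φ) := by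
    have hQ : Integrable (fun x => 2 * ε * (deriv u x * deriv φ x + V x * (u x * φ x)) +
        ε ^ 2 * ((deriv φ x) ^ 2 + V x * (φ x) ^ 2)) (volume : Measure ℝ) :=
      (hB.const_mul _).add ((iv_int hV hφ).const_mul _)
    unfold IV
    rw [← integral_const_mul, ← integral_const_mul,
      ← integral_add (hB.const_mul _) ((iv_int hV hφ).const_mul _),
      ← integral_add (iv_int hV hu) hQ]
    refine integral_congr_ae ?_
    filter_upwards [hwd] with x hx
    rw [hx]; ring
  linarith

lemma dubois {V : ℝ → ℝ} (hV : MemLp V ⊤ (volume : Measure ℝ)) (h0 : ∀ᵐ x : ℝ, 0 ≤ V x)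
    {a : ℝ} {u : ℝ → ℝ} (hua : InKa a u) (hmin : ∀ w : ℝ → ℝ, InKa a w → IV V u ≤ IV V w)
    {p q : ℝ} (hpq : p < q) (ha : a ≤ p ∨ q ≤ a) :
    ∃ c : ℝ, ∀ᵐ x : ℝ, x ∈ Set.Ioc p q → deriv u x = (∫ t in p..x, V t * u t) + c := by
  have hu := hua.1
  have hdu := (h1_deriv hu).1
  have hVu : LocallyIntegrable (fun t => V t * u t) (volume : Measure ℝ) := by
    have : MemLp (fun t => V t * u t) 2 (volume : Measure ℝ) := by
      exact hu.2.1.mul hV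
    exact this.locallyIntegrable (by norm_num)
  have hVuI : ∀ x y, IntervalIntegrable (fun t => V t * u t) volume x y := fun x y =>
    (hVu.integrableOn_isCompact isCompact_uIcc).intervalIntegrable
  set G : ℝ → ℝ := fun x => ∫ t in p..x, V t * u t with hG
  have hGc : Continuous G := intervalIntegral.continuous_primitive hVuI p
  have hGac : AbsolutelyContinuousOnInterval G p q := h1_ac_int hVu p p q
  have hduI : IntervalIntegrable (deriv u) volume p q := (h1_ac hu p q).intervalIntegrable_deriv
  have hq : q - p ≠ 0 := by linarith [hpq]
  set c : ℝ := (∫ t in p..q, (deriv u t - G t)) / (q - p) with hc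
  set h : ℝ → ℝ := fun t => deriv u t - G t - c with hh
  set H : ℝ → ℝ := Set.indicator (Set.Ioc p q) h with hH
  have hH2 : MemLp H 2 (volume : Measure ℝ) := by
    rw [hH, memLp_indicator_iff_restrict measurableSet_Ioc]
    obtain ⟨K, hK⟩ := isCompact_Icc.exists_bound_of_continuousOn
      (s := Set.Icc p q) hGc.continuousOn
    have hG2 : MemLp G 2 (volume.restrict (Set.Ioc p q)) := by
      refine MemLp.of_bound hGc.aestronglyMeasurable K ?_
      filter_upwards [ae_restrict_mem measurableSet_Ioc] with x hx
      exact hK x ⟨hx.1.le, hx.2⟩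
    exact (hdu.restrict _ |>.sub hG2).sub (memLp_const c)
  have hHl : LocallyIntegrable H (volume : Measure ℝ) := hH2.locallyIntegrable (by norm_num)
  have hHI : ∀ x y, IntervalIntegrable H volume x y := fun x y =>
    (hHl.integrableOn_isCompact isCompact_uIcc).intervalIntegrable
  have hHpq : ∫ t in p..q, H t = 0 := by
    have : ∫ t in p..q, H t = ∫ t in p..q, h t := by
      refine intervalIntegral.integral_congr_ae (Eventually.of_forall fun x hx => ?_)
      rw [Set.uIoc_of_le hpq.le] at hx
      rw [hH, Set.indicator_of_mem hx]
    rw [this, hh, intervalIntegral.integral_sub (hduI.sub (hGc.intervalIntegrable _ _)) (by simp),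
      intervalIntegral.integral_const, hc, smul_eq_mul]
    field_simp; ring
  set φ : ℝ → ℝ := fun x => ∫ t in p..x, H t with hφ
  have hφc : Continuous φ := intervalIntegral.continuous_primitive hHI p
  have hφp : ∀ x, x ≤ p → φ x = 0 := by
    intro x hx
    refine intervalIntegral.integral_zero_ae (Eventually.of_forall fun t ht => ?_)
    rw [Set.uIoc_of_ge hx] at ht
    exact Set.indicator_of_notMem (fun h' => absurd h'.1 (not_lt.2 ht.2)) _
  have hφq : ∀ x, q ≤ x → φ x = 0 := by
    intro x hx
    have e := intervalIntegral.integral_add_adjacent_intervals (hHI p q) (hHI q x)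
    have : ∫ t in q..x, H t = 0 := by
      refine intervalIntegral.integral_zero_ae (Eventually.of_forall fun t ht => ?_)
      rw [Set.uIoc_of_le hx] at ht
      exact Set.indicator_of_notMem (fun h' => absurd h'.2 (not_le.2 ht.1)) _
    simp only [hφ]; rw [← e, hHpq, this]; simp
  have hφac : ∀ x y, AbsolutelyContinuousOnInterval φ x y := fun x y => h1_ac_int hHl p x y
  have hφd : ∀ᵐ x : ℝ, deriv φ x = H x := by
    filter_upwards [_root_.LocallyIntegrable.ae_hasDerivAt_integral hHl] with x hx
    exact (hx p).deriv
  have hcs : HasCompactSupport φ := by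
    refine HasCompactSupport.intro (isCompact_Icc (a := p) (b := q)) fun x hx => ?_
    by_cases h1 : x ≤ p
    · exact hφp x h1
    · refine hφq x ?_
      by_contra h2
      exact hx ⟨(not_le.1 h1).le, (not_le.1 h2).le⟩
  have hφ1 : IsH1 φ := h1_mk hφc (hφc.memLp_of_hasCompactSupport hcs)
    ((memLp_congr_ae hφd).2 hH2) hφac
  have hφa : φ a = 0 := ha.elim (hφp a) (hφq a)
  have hE := euler hV h0 hua hmin hφ1 hφa
  have hE2 : ∫ x in p..q, (deriv u x * H x + V x * (u x * φ x)) = 0 := by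
    rw [← hE, intervalIntegral.integral_of_le hpq.le, ← integral_indicator measurableSet_Ioc]
    refine integral_congr_ae ?_
    filter_upwards [hφd] with x hx
    by_cases hm : x ∈ Set.Ioc p q
    · rw [Set.indicator_of_mem hm, hx]
    · rw [Set.indicator_of_notMem hm, hx, hH, Set.indicator_of_notMem hm]
      have : φ x = 0 := by
        by_cases h1 : x ≤ p
        · exact hφp x h1
        · refine hφq x ?_
          by_contra h2
          exact hm ⟨(not_le.1 h1), (not_le.1 h2).le⟩
      simp [this]
  have hdH : IntervalIntegrable (fun x => deriv u x * H x) volume p q :=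
    (hdu.integrable_mul hH2).intervalIntegrable
  have hVI : IntervalIntegrable (fun x => V x * (u x * φ x)) volume p q :=
    (vint hV hu.2.1 hφ1.2.1).intervalIntegrable
  have hibp : ∫ x in p..q, V x * (u x * φ x) = - ∫ x in p..q, G x * H x := by
    have e := hGac.integral_mul_deriv_eq_deriv_mul (hφac p q)
    rw [hφp p le_rfl, hφq q le_rfl] at e
    have e1 : ∫ x in p..q, G x * deriv φ x = ∫ x in p..q, G x * H x := by
      refine intervalIntegral.integral_congr_ae ?_
      filter_upwards [hφd] with x hx _
      rw [hx]
    have e2 : ∫ x in p..q, deriv G x * φ x = ∫ x in p..q, V x * (u x * φ x) := by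
      refine intervalIntegral.integral_congr_ae ?_
      filter_upwards [_root_.LocallyIntegrable.ae_hasDerivAt_integral hVu] with x hx _
      have := (hx p).deriv
      rw [hG, this]; ring
    rw [e1, e2] at e
    linarith
  rw [intervalIntegral.integral_add hdH hVI, hibp] at hE2
  have hGH : IntervalIntegrable (fun x => G x * H x) volume p q :=
    (hHI p q).continuousOn_mul hGc.continuousOn
  have hHH : ∫ x in p..q, H x ^ 2 = 0 := by
    have : ∫ x in p..q, H x ^ 2 =
        ∫ x in p..q, ((deriv u x * H x - G x * H x) - c * H x) := by
      refine intervalIntegral.integral_congr_ae (Eventually.of_forall fun x hx => ?_)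
      rw [Set.uIoc_of_le hpq.le] at hx
      simp only [hH, Set.indicator_of_mem hx, hh]; ring
    rw [this, intervalIntegral.integral_sub (hdH.sub hGH) ((hHI p q).const_mul c),
      intervalIntegral.integral_sub hdH hGH, intervalIntegral.integral_const_mul, hHpq]
    linarith
  refine ⟨c, ?_⟩
  have hz : ∫ x : ℝ, H x ^ 2 = 0 := by
    rw [← hHH, intervalIntegral.integral_of_le hpq.le, ← integral_indicator measurableSet_Ioc]
    congr 1; funext x
    by_cases hm : x ∈ Set.Ioc p q
    · rw [Set.indicator_of_mem hm]
    · rw [Set.indicator_of_notMem hm, hH, Set.indicator_of_notMem hm]; simp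
  rw [integral_eq_zero_iff_of_nonneg (fun x => sq_nonneg _) hH2.integrable_sq] at hz
  filter_upwards [hz] with x hx hm
  have hx' : H x = 0 := by simpa using hx
  rw [hH, Set.indicator_of_mem hm] at hx'
  simp only [hh] at hx'
  linarith

lemma interior_reg {V : ℝ → ℝ} (hV : MemLp V ⊤ (volume : Measure ℝ)) (h0 : ∀ᵐ x : ℝ, 0 ≤ V x)
    {a : ℝ} {u : ℝ → ℝ} (hua : InKa a u) (hmin : ∀ w : ℝ → ℝ, InKa a w → IV V u ≤ IV V w)
    {p q : ℝ} (hpq : p < q) (ha : a ≤ p ∨ q ≤ a) {x y : ℝ} (hx : x ∈ Set.Ioo p q)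
    (hy : y ∈ Set.Ioo p q) :
    DifferentiableAt ℝ u x ∧ deriv u y = deriv u x + ∫ t in x..y, V t * u t := by
  obtain ⟨c, hc⟩ := dubois hV h0 hua hmin hpq ha
  have hu := hua.1
  have hVuI : ∀ x y, IntervalIntegrable (fun t => V t * u t) volume x y := by
    have : MemLp (fun t => V t * u t) 2 (volume : Measure ℝ) := hu.2.1.mul hV
    exact fun x y => ((this.locallyIntegrable (by norm_num)).integrableOn_isCompact
      isCompact_uIcc).intervalIntegrable
  have hGc : Continuous (fun x => ∫ t in p..x, V t * u t) :=
    intervalIntegral.continuous_primitive hVuI p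
  have key : ∀ z ∈ Set.Ioo p q, HasDerivAt u ((∫ t in p..z, V t * u t) + c) z := by
    intro z hz
    have hGc' : Continuous (fun s => (∫ t in p..s, V t * u t) + c) := hGc.add continuous_const
    have h1 := hGc'.integral_hasStrictDerivAt p z
    have h2 := h1.hasDerivAt.const_add (u p)
    refine h2.congr_of_eventuallyEq ?_
    filter_upwards [isOpen_Ioo.mem_nhds hz] with w hw
    have e := (h1_ac hu p w).integral_deriv_eq_sub
    have : ∫ s in p..w, deriv u s = ∫ s in p..w, ((∫ t in p..s, V t * u t) + c) := by
      refine intervalIntegral.integral_congr_ae ?_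
      filter_upwards [hc] with s hs hm
      rw [Set.uIoc_of_le hw.1.le] at hm
      exact hs ⟨hm.1, hm.2.trans hw.2.le⟩
    linarith
  refine ⟨(key x hx).differentiableAt, ?_⟩
  rw [(key x hx).deriv, (key y hy).deriv]
  have := intervalIntegral.integral_add_adjacent_intervals (hVuI p x) (hVuI x y)
  linarith

/-- **Regularity of the minimizer.** For `V ∈ L^∞(ℝ)` with `ess inf V > 0`, `a ∈ ℝ`,
and `u_a` the minimizer of `‖·‖_V²` over `K_a`, we have `u_a ∈ W^{2,∞}(ℝ∖{a})` and
`u_a'' = V u_a` a.e. on `ℝ∖{a}`:  there are essentially bounded functions `v` (the first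
derivative) and `w` (the second derivative) such that `u_a` is a primitive of `v` and `v`
a primitive of `w` on each of the half-lines `(-∞,a)` and `(a,∞)`, and `w = V·u_a` a.e. -/
theorem minimizer_W2inf (V : ℝ → ℝ) (hV : MemLp V ⊤ (volume : Measure ℝ))
    (hpos : 0 < essInf V (volume : Measure ℝ)) (a : ℝ)
    (ua : ℝ → ℝ) (hua : InKa a ua)
    (hmin : ∀ u : ℝ → ℝ, InKa a u → IV V ua ≤ IV V u) :
    ∃ v w : ℝ → ℝ, MemLp v ⊤ (volume : Measure ℝ) ∧ MemLp w ⊤ (volume : Measure ℝ) ∧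
      (∀ x y : ℝ, a < x → a < y →
        ua y = ua x + ∫ t in x..y, v t ∧ v y = v x + ∫ t in x..y, w t) ∧
      (∀ x y : ℝ, x < a → y < a →
        ua y = ua x + ∫ t in x..y, v t ∧ v y = v x + ∫ t in x..y, w t) ∧
      (∀ᵐ x : ℝ, w x = V x * ua x) := by
  obtain ⟨M, hM⟩ := vbound hV
  have h0 : ∀ᵐ x : ℝ, 0 ≤ V x := by
    have hb : IsBoundedUnder (· ≥ ·) (ae (volume : Measure ℝ)) V := by
      refine ⟨-M, ?_⟩
      rw [eventually_map]
      filter_upwards [hM] with x hx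
      exact (abs_le.1 hx).1
    filter_upwards [ae_essInf_le hb] with x hx
    exact hpos.le.trans hx
  have hu1 : ∀ x, |ua x| ≤ 1 := by
    have hs := hua.2.2
    unfold supNorm at hs
    have hb : BddAbove (Set.range fun x => |ua x|) := by
      by_contra hb
      rw [Real.iSup_of_not_bddAbove hb] at hs
      norm_num at hs
    intro x
    rw [← hs]; exact le_ciSup hb x
  have hM' : ∀ᵐ x : ℝ, ‖V x * ua x‖ ≤ M := by
    filter_upwards [hM] with x hx
    rw [norm_mul]
    have := hu1 x
    rw [Real.norm_eq_abs (ua x)]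
    nlinarith [norm_nonneg (V x), abs_nonneg (ua x)]
  have hint : ∀ x y, |∫ t in x..y, V t * ua t| ≤ M * |y - x| := fun x y =>
    intervalIntegral.norm_integral_le_of_norm_le_const_ae (hM'.mono fun t ht _ => ht)
  have hM0 : 0 ≤ M := by
    have := hint 0 1
    norm_num at this
    exact (abs_nonneg _).trans this
  have hR : ∀ x y, a < x → a < y →
      DifferentiableAt ℝ ua x ∧ deriv ua y = deriv ua x + ∫ t in x..y, V t * ua t := by
    intro x y hx hy
    refine interior_reg hV h0 hua hmin (p := a) (q := max x y + 1)
      (by linarith [le_max_left x y]) (Or.inl le_rfl) ⟨hx, ?_⟩ ⟨hy, ?_⟩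
    · linarith [le_max_left x y]
    · linarith [le_max_right x y]
  have hL : ∀ x y, x < a → y < a →
      DifferentiableAt ℝ ua x ∧ deriv ua y = deriv ua x + ∫ t in x..y, V t * ua t := by
    intro x y hx hy
    refine interior_reg hV h0 hua hmin (p := min x y - 1) (q := a)
      (by linarith [min_le_left x y]) (Or.inr le_rfl) ⟨?_, hx⟩ ⟨?_, hy⟩
    · linarith [min_le_left x y]
    · linarith [min_le_right x y]
  have hF : ∀ x y, ua y = ua x + ∫ t in x..y, deriv ua t := by
    intro x y
    rw [(h1_ac hua.1 x y).integral_deriv_eq_sub]; ring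
  have hb : ∀ x, x ≠ a → |deriv ua x| ≤ 2 + M := by
    intro x hx
    have fin : ∀ ξ s t : ℝ, deriv ua ξ = ua s - ua t → |ξ - x| ≤ 1 →
        deriv ua ξ = deriv ua x + ∫ t in x..ξ, V t * ua t → |deriv ua x| ≤ 2 + M := by
      intro ξ s t h1 h2 h3
      have b := hint x ξ
      have b' : M * |ξ - x| ≤ M := by nlinarith
      have b2 := abs_le.1 (b.trans b')
      have b3 := abs_le.1 (hu1 s)
      have b4 := abs_le.1 (hu1 t)
      rw [abs_le]; constructor <;> linarith [b2.1, b2.2, b3.1, b3.2, b4.1, b4.2]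
    rcases lt_or_gt_of_ne hx with hx | hx
    · obtain ⟨ξ, hξ, e⟩ := exists_deriv_eq_slope ua (show x - 1 < x by linarith)
        hua.1.1.continuousOn (fun z hz =>
          (hL z z (hz.2.trans hx) (hz.2.trans hx)).1.differentiableWithinAt)
      refine fin ξ x (x - 1) (by rw [e]; simp) ?_ (hL x ξ hx (hξ.2.trans hx)).2
      rw [abs_le]; constructor <;> linarith [hξ.1, hξ.2]
    · obtain ⟨ξ, hξ, e⟩ := exists_deriv_eq_slope ua (show x < x + 1 by linarith)
        hua.1.1.continuousOn (fun z hz =>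
          (hR z z (lt_trans hx hz.1) (lt_trans hx hz.1)).1.differentiableWithinAt)
      refine fin ξ (x + 1) x (by rw [e]; simp) ?_ (hR x ξ hx (lt_trans hx hξ.1)).2
      rw [abs_le]; constructor <;> linarith [hξ.1, hξ.2]
  refine ⟨deriv ua, fun x => V x * ua x, ?_, ?_, ?_, ?_, Eventually.of_forall fun x => rfl⟩
  · refine memLp_top_of_bound (measurable_deriv _).aestronglyMeasurable (2 + M) ?_
    have : ∀ᵐ x : ℝ, x ≠ a := by simp [ae_iff, measure_singleton]
    filter_upwards [this] with x hx using hb x hx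
  · exact memLp_top_of_bound (hV.1.mul hua.1.1.aestronglyMeasurable) M hM'
  · exact fun x y hx hy => ⟨hF x y, (hR x y hx hy).2⟩
  · exact fun x y hx hy => ⟨hF x y, (hL x y hx hy).2⟩
end

section
/- Let V ∈ L^∞(ℝ) with v₀ := ess inf_{x∈ℝ} V(x) > 0 and v₁ := ess sup_{x∈ℝ} V(x), fix a ∈ ℝ, and let u_a ∈ K_a be the unique minimizer of u ↦ ‖u‖_V² over K_a. Then e^{−√v₁ |x−a|} ≤ u_a(x) ≤ e^{−√v₀ |x−a|} holds for all x ∈ ℝ. -/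
open MeasureTheory Filter Real Topology

/-- the comparison function -/
noncomputable def cmpW (k a : ℝ) (x : ℝ) : ℝ := Real.exp (-k * |x - a|)

lemma cmpW_pos (k a x : ℝ) : 0 < cmpW k a x := Real.exp_pos _

lemma cmpW_le_one {k : ℝ} (hk : 0 < k) (a x : ℝ) : cmpW k a x ≤ 1 := by
  unfold cmpW
  rw [Real.exp_le_one_iff]
  have := abs_nonneg (x - a)
  nlinarith [mul_nonneg hk.le this]

lemma cmpW_self (k a : ℝ) : cmpW k a a = 1 := by simp [cmpW]

lemma cmpW_hasDerivAt_right (k a x : ℝ) (hx : a < x) :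
    HasDerivAt (cmpW k a) (-k * cmpW k a x) x := by
  have h1 : HasDerivAt (fun y : ℝ => Real.exp (-k * (y - a))) (Real.exp (-k * (x - a)) * (-k * 1)) x :=
    (((hasDerivAt_id x).sub_const a).const_mul (-k)).exp
  have h2 : cmpW k a =ᶠ[𝓝 x] fun y : ℝ => Real.exp (-k * (y - a)) := by
    filter_upwards [lt_mem_nhds hx] with y hy
    simp [cmpW, abs_of_pos (sub_pos.2 hy)]
  have h3 := h1.congr_of_eventuallyEq h2
  have e := h2.eq_of_nhds
  rw [e]
  refine h3.congr_deriv ?_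
  ring

lemma cmpW_hasDerivAt_left (k a x : ℝ) (hx : x < a) :
    HasDerivAt (cmpW k a) (k * cmpW k a x) x := by
  have h1 : HasDerivAt (fun y : ℝ => Real.exp (k * (y - a))) (Real.exp (k * (x - a)) * (k * 1)) x :=
    (((hasDerivAt_id x).sub_const a).const_mul k).exp
  have h2 : cmpW k a =ᶠ[𝓝 x] fun y : ℝ => Real.exp (k * (y - a)) := by
    filter_upwards [gt_mem_nhds hx] with y hy
    simp [cmpW, abs_of_neg (sub_neg.2 hy)]
    ring
  have h3 := h1.congr_of_eventuallyEq h2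
  have e := h2.eq_of_nhds
  rw [e]
  refine h3.congr_deriv ?_
  ring

lemma cmpW_cont (k a : ℝ) : Continuous (cmpW k a) := by
  unfold cmpW; fun_prop

lemma cmpW_ac (k a b c : ℝ) : AbsolutelyContinuousOnInterval (cmpW k a) b c := by
  have h1 : LipschitzWith 1 (fun x : ℝ => |x - a|) := by
    refine LipschitzWith.of_dist_le_mul fun x y => ?_
    simp only [Real.dist_eq, NNReal.coe_one, one_mul]
    refine (abs_abs_sub_abs_le _ _).trans (le_of_eq ?_)
    congr 1; ring
  have h2 : ContDiff ℝ 1 (fun y : ℝ => Real.exp (-k * y)) := by fun_prop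
  have hcomp : IsCompact (Set.Icc (-(|b - a| + |c - a|)) (|b - a| + |c - a|)) := isCompact_Icc
  obtain ⟨K, hK⟩ := (h2.contDiffOn
    (s := Set.Icc (-(|b - a| + |c - a|)) (|b - a| + |c - a|))).exists_lipschitzOnWith
    (by decide) (convex_Icc _ _) hcomp
  have h3 := hK.comp (h1.lipschitzOnWith (s := Set.uIcc b c)) (fun x hx => by
    rcases Set.mem_uIcc.1 hx with h | h <;> constructor <;> grind)
  exact h3.absolutelyContinuousOnInterval

lemma cmpW_integrable {k : ℝ} (hk : 0 < k) (a : ℝ) : Integrable (cmpW k a) := by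
  have h0 : Integrable (fun x : ℝ => Real.exp (-k * |x|)) := by
    rw [← integrableOn_univ, ← Set.Iic_union_Ioi (a := (0:ℝ))]
    refine IntegrableOn.union ?_ ?_
    · refine (integrableOn_exp_mul_Iic hk 0).congr_fun (fun x hx => ?_) measurableSet_Iic
      simp [abs_of_nonpos (Set.mem_Iic.1 hx)]
    · refine (integrableOn_exp_mul_Ioi (neg_neg_of_pos hk) 0).congr_fun (fun x hx => ?_) measurableSet_Ioi
      simp [abs_of_pos (Set.mem_Ioi.1 hx)]
  exact h0.comp_sub_right a

lemma cmpW_memLp {k : ℝ} (hk : 0 < k) (a : ℝ) : MemLp (cmpW k a) 2 volume := by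
  rw [memLp_two_iff_integrable_sq (cmpW_cont k a).aestronglyMeasurable]
  refine (cmpW_integrable (k := 2 * k) (by linarith) a).congr (ae_of_all _ fun x => ?_)
  simp only [cmpW]
  rw [← Real.exp_nat_mul]
  congr 1; push_cast; ring

lemma ae_ne' (a : ℝ) : ∀ᵐ x : ℝ, x ≠ a := by simp [ae_iff, measure_singleton]

lemma cmpW_deriv_abs {k : ℝ} (hk : 0 < k) (a : ℝ) :
    ∀ᵐ x : ℝ, |deriv (cmpW k a) x| ≤ k * cmpW k a x := by
  filter_upwards [ae_ne' a] with x hx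
  have := cmpW_pos k a x
  rcases lt_or_gt_of_ne hx with h | h
  · rw [(cmpW_hasDerivAt_left k a x h).deriv, abs_of_nonneg (by positivity)]
  · rw [(cmpW_hasDerivAt_right k a x h).deriv, neg_mul, abs_neg, abs_of_nonneg (by positivity)]

lemma cmpW_deriv_memLp {k : ℝ} (hk : 0 < k) (a : ℝ) : MemLp (deriv (cmpW k a)) 2 volume := by
  refine ((cmpW_memLp hk a).const_mul k).of_le (measurable_deriv _).aestronglyMeasurable ?_
  filter_upwards [cmpW_deriv_abs hk a] with x hx
  rw [Real.norm_eq_abs, Real.norm_eq_abs]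
  exact hx.trans (le_abs_self _)

lemma cmpW_tendsto_top {k : ℝ} (hk : 0 < k) (a : ℝ) : Tendsto (cmpW k a) atTop (𝓝 0) := by
  unfold cmpW
  refine Real.tendsto_exp_atBot.comp ?_
  refine Tendsto.const_mul_atTop_of_neg (neg_neg_of_pos hk) ?_
  exact tendsto_abs_atTop_atTop.comp (tendsto_atTop_add_const_right _ _ tendsto_id)

lemma cmpW_tendsto_bot {k : ℝ} (hk : 0 < k) (a : ℝ) : Tendsto (cmpW k a) atBot (𝓝 0) := by
  unfold cmpW
  refine Real.tendsto_exp_atBot.comp ?_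
  refine Tendsto.const_mul_atTop_of_neg (neg_neg_of_pos hk) ?_
  exact tendsto_abs_atBot_atTop.comp (tendsto_atBot_add_const_right _ _ tendsto_id)

lemma ac_ae_diff {f : ℝ → ℝ} (hf : ∀ b c, AbsolutelyContinuousOnInterval f b c) :
    ∀ᵐ x : ℝ, DifferentiableAt ℝ f x := by
  have h : ∀ᵐ x : ℝ, ∀ n : ℕ, x ∈ Set.uIcc (-(n:ℝ)) n → DifferentiableAt ℝ f x :=
    ae_all_iff.2 fun n => (hf _ _).ae_differentiableAt
  filter_upwards [h] with x hx
  obtain ⟨n, hn⟩ := exists_nat_ge |x|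
  refine hx n ?_
  rw [Set.uIcc_of_le (by linarith [abs_nonneg x])]
  exact abs_le.1 hn

lemma ac_max {f : ℝ → ℝ} {b c : ℝ} (hf : AbsolutelyContinuousOnInterval f b c) :
    AbsolutelyContinuousOnInterval (fun x => max (f x) 0) b c := by
  refine squeeze_zero (fun t => Finset.sum_nonneg (fun i hi => dist_nonneg)) (fun t => ?_) hf
  refine Finset.sum_le_sum fun i hi => ?_
  simp only [Real.dist_eq]
  simpa using abs_max_sub_max_le_abs (f (t.2 i).1) (f (t.2 i).2) 0

lemma deriv_max {f : ℝ → ℝ} {x : ℝ} (hf : DifferentiableAt ℝ f x)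
    (_hp : DifferentiableAt ℝ (fun x => max (f x) 0) x) :
    (deriv (fun x => max (f x) 0) x = deriv f x ∨ deriv (fun x => max (f x) 0) x = 0) := by
  rcases lt_trichotomy (f x) 0 with h | h | h
  · right
    have : (fun x => max (f x) 0) =ᶠ[𝓝 x] fun _ => 0 := by
      filter_upwards [hf.continuousAt.eventually (gt_mem_nhds h)] with y hy
      exact max_eq_right hy.le
    rw [this.deriv_eq]; simp
  · right
    apply IsLocalMin.deriv_eq_zero
    refine Eventually.of_forall fun y => ?_
    simp [h]
  · left
    have : (fun x => max (f x) 0) =ᶠ[𝓝 x] f := by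
      filter_upwards [hf.continuousAt.eventually (lt_mem_nhds h)] with y hy
      exact max_eq_left hy.le
    exact this.deriv_eq

lemma IsH1.ac {u : ℝ → ℝ} (hu : IsH1 u) :
    (∀ b c, AbsolutelyContinuousOnInterval u b c) ∧ MemLp (deriv u) 2 volume := by
  obtain ⟨hc, hL, u', hu', hi⟩ := hu
  have hloc : LocallyIntegrable u' volume := hu'.locallyIntegrable (by norm_num)
  have hii : ∀ b c, IntervalIntegrable u' volume b c := fun b c =>
    intervalIntegrable_iff.mpr <|
      (LocallyIntegrable.integrableOn_isCompact hloc isCompact_uIcc).mono_set Set.uIoc_subset_uIcc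
  have hfun : u = fun x => u 0 + ∫ t in (0:ℝ)..x, u' t := funext hi
  constructor
  · intro b c
    have h1 := (hii (min 0 (min b c)) (max 0 (max b c))).absolutelyContinuousOnInterval_intervalIntegral
      (c := 0) (by rw [Set.uIcc_of_le (by simp)]; simp)
    have h2 := h1.mono (c := b) (d := c) (by
      rw [Set.uIcc_of_le (a := min 0 (min b c)) (by simp)]
      exact Set.Icc_subset_Icc (min_le_right _ _) (le_max_right _ _))
    rw [hfun]
    unfold AbsolutelyContinuousOnInterval at h2 ⊢
    simpa using h2
  · refine hu'.ae_eq ?_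
    filter_upwards [LocallyIntegrable.ae_hasDerivAt_integral hloc] with x hx
    have := (hx 0).const_add (u 0)
    rw [← hfun] at this
    exact this.deriv.symm

lemma isH1_of_ac {u : ℝ → ℝ} (hc : Continuous u) (hL : MemLp u 2 volume)
    (hac : ∀ b c, AbsolutelyContinuousOnInterval u b c) (hd : MemLp (deriv u) 2 volume) : IsH1 u :=
  ⟨hc, hL, deriv u, hd, fun x => by rw [(hac 0 x).integral_deriv_eq_sub]; ring⟩

lemma supNorm_abs_le {u : ℝ → ℝ} (h : supNorm u = 1) (x : ℝ) : |u x| ≤ 1 := by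
  rw [← h]
  refine le_ciSup (f := fun x => |u x|) ?_ x
  by_contra hb
  have : supNorm u = 0 := Real.iSup_of_not_bddAbove hb
  linarith

lemma supNorm_eq {u : ℝ → ℝ} {a : ℝ} (h : u a = 1) (hb : ∀ x, |u x| ≤ 1) : supNorm u = 1 := by
  refine le_antisymm (ciSup_le hb) ?_
  have := le_ciSup (f := fun x => |u x|) ⟨1, by rintro _ ⟨x, rfl⟩; exact hb x⟩ a
  simp only [h, abs_one] at this
  exact this

lemma by_parts {k a : ℝ} (hk : 0 < k) {p : ℝ → ℝ} (hpa : p a = 0) (hb : ∀ x, |p x| ≤ 2)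
    (hac : ∀ b c, AbsolutelyContinuousOnInterval p b c) (hL : MemLp p 2 volume)
    (hd : MemLp (deriv p) 2 volume) :
    Integrable (fun x => deriv (cmpW k a) x * deriv p x + k ^ 2 * (cmpW k a x * p x)) ∧
    ∫ x, (deriv (cmpW k a) x * deriv p x + k ^ 2 * (cmpW k a x * p x)) = 0 := by
  have hw := cmpW_memLp hk a
  have hw' := cmpW_deriv_memLp hk a
  have hI : Integrable (fun x => deriv (cmpW k a) x * deriv p x + k ^ 2 * (cmpW k a x * p x)) :=
    (hw'.integrable_mul hd).add ((hw.integrable_mul hL).const_mul _)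
  refine ⟨hI, ?_⟩
  set R : ℝ → ℝ := fun x => deriv (cmpW k a) x * p x + cmpW k a x * deriv p x with hR
  have hRI : Integrable R := (hw'.integrable_mul hL).add (hw.integrable_mul hd)
  have hz : ∀ l : Filter ℝ, Tendsto (cmpW k a) l (𝓝 0) →
      Tendsto (fun x => cmpW k a x * p x) l (𝓝 0) := by
    intro l hl
    refine squeeze_zero_norm (a := fun x => cmpW k a x * 2) (fun x => ?_) (by simpa using hl.mul_const 2)
    rw [norm_mul, Real.norm_eq_abs, Real.norm_eq_abs, abs_of_pos (cmpW_pos k a x)]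
    exact mul_le_mul_of_nonneg_left (hb x) (cmpW_pos k a x).le
  have h1 : ∫ x in Set.Ioi a, R x = 0 := by
    refine tendsto_nhds_unique
      (intervalIntegral_tendsto_integral_Ioi a hRI.integrableOn tendsto_id) ?_
    have : ∀ b, ∫ x in a..id b, R x = cmpW k a b * p b := fun b => by
      rw [id, (cmpW_ac k a a b).integral_deriv_mul_eq_sub (hac a b), hpa]; ring
    simp only [this]
    exact hz _ (cmpW_tendsto_top hk a)
  have h2 : ∫ x in Set.Iic a, R x = 0 := by
    refine tendsto_nhds_unique
      (intervalIntegral_tendsto_integral_Iic a hRI.integrableOn tendsto_id) ?_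
    have : ∀ b, ∫ x in id b..a, R x = -(cmpW k a b * p b) := fun b => by
      rw [id, (cmpW_ac k a b a).integral_deriv_mul_eq_sub (hac b a), hpa]; ring
    simp only [this]
    simpa using (hz _ (cmpW_tendsto_bot hk a)).neg
  rw [← intervalIntegral.integral_Iic_add_Ioi (b := a) hI.integrableOn hI.integrableOn]
  have e1 : ∫ x in Set.Iic a, (deriv (cmpW k a) x * deriv p x + k ^ 2 * (cmpW k a x * p x)) =
      ∫ x in Set.Iic a, k * R x := by
    refine setIntegral_congr_ae measurableSet_Iic ?_
    filter_upwards [ae_ne' a] with x hx hxa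
    simp only [hR]
    rw [(cmpW_hasDerivAt_left k a x (lt_of_le_of_ne hxa hx)).deriv]; ring
  have e2 : ∫ x in Set.Ioi a, (deriv (cmpW k a) x * deriv p x + k ^ 2 * (cmpW k a x * p x)) =
      ∫ x in Set.Ioi a, -k * R x := by
    refine setIntegral_congr_fun measurableSet_Ioi fun x hx => ?_
    simp only [hR]
    rw [(cmpW_hasDerivAt_right k a x hx).deriv]; ring
  rw [e1, e2, integral_const_mul, integral_const_mul, h1, h2]; simp

lemma key (V : ℝ → ℝ) (hV : MemLp V ⊤ (volume : Measure ℝ)) {v0 : ℝ} (hv0 : 0 < v0)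
    (hVv : ∀ᵐ x : ℝ, v0 ≤ V x) (a : ℝ) (u : ℝ → ℝ) (hua : InKa a u)
    (hmin : ∀ v : ℝ → ℝ, InKa a v → IV V u ≤ IV V v) {k : ℝ} (hk : 0 < k) {ε : ℝ}
    (hε : ε = 1 ∨ ε = -1) (hVε : ∀ᵐ x : ℝ, ε * k ^ 2 ≤ ε * V x) (x : ℝ) :
    ε * (u x - cmpW k a x) ≤ 0 := by
  obtain ⟨huH, hu1, hus⟩ := hua
  have hub := supNorm_abs_le hus
  obtain ⟨huac, hud⟩ := huH.ac
  have huc := huH.1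
  have huL := huH.2.1
  have hwL := cmpW_memLp hk a
  have hwd := cmpW_deriv_memLp hk a
  have hε2 : ε ^ 2 = 1 := by rcases hε with rfl | rfl <;> norm_num
  set f : ℝ → ℝ := fun x => ε * (u x - cmpW k a x) with hf
  set p : ℝ → ℝ := fun x => max (f x) 0 with hp
  have hfac : ∀ b c, AbsolutelyContinuousOnInterval f b c := fun b c =>
    ((huac b c).fun_sub (cmpW_ac k a b c)).const_mul ε
  have hpac : ∀ b c, AbsolutelyContinuousOnInterval p b c := fun b c => ac_max (hfac b c)
  have hfc : Continuous f := continuous_const.mul (huc.sub (cmpW_cont k a))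
  have hpc : Continuous p := hfc.max continuous_const
  have hfL : MemLp f 2 volume := (huL.sub hwL).const_mul ε
  have hpL : MemLp p 2 volume := by
    refine hfL.of_le hpc.aestronglyMeasurable (ae_of_all _ fun x => ?_)
    simp only [hp, Real.norm_eq_abs]
    rcases max_cases (f x) 0 with h | h <;> rw [h.1] <;> simp
  have hud' := ac_ae_diff huac
  have hpd' := ac_ae_diff hpac
  have hwd' := ac_ae_diff (fun b c => cmpW_ac k a b c)
  have hfder : ∀ᵐ x : ℝ, DifferentiableAt ℝ f x ∧ deriv f x = ε * (deriv u x - deriv (cmpW k a) x) := by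
    filter_upwards [hud', hwd'] with x h1 h2
    have := (h1.hasDerivAt.sub h2.hasDerivAt).const_mul ε
    exact ⟨this.differentiableAt, this.deriv⟩
  have hpder : ∀ᵐ x : ℝ, deriv p x = deriv f x ∨ deriv p x = 0 := by
    filter_upwards [hfder, hpd'] with x h1 h2
    exact deriv_max h1.1 h2
  have hpdL : MemLp (deriv p) 2 volume := by
    refine ((hud.sub hwd).const_mul ε).of_le (measurable_deriv _).aestronglyMeasurable ?_
    filter_upwards [hfder, hpder] with x h1 h2
    rcases h2 with h | h
    · rw [h, h1.2]; simp
    · rw [h]; simp only [norm_zero]; exact norm_nonneg _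
  have hpa : p a = 0 := by simp [hp, hf, hu1, cmpW_self]
  have hpb : ∀ x, |p x| ≤ 2 := by
    intro x
    have h1 := abs_le.1 (hub x)
    have h2 := cmpW_pos k a x
    have h3 := cmpW_le_one hk a x
    rw [abs_of_nonneg (le_max_right _ _)]
    refine max_le ?_ (by norm_num)
    rcases hε with rfl | rfl <;> simp only [hf] <;> linarith
  set v : ℝ → ℝ := fun x => u x - ε * p x with hv
  have hvder : ∀ᵐ x : ℝ, deriv v x = deriv u x - ε * deriv p x := by
    filter_upwards [hud', hpd'] with x h1 h2
    exact (h1.hasDerivAt.sub (h2.hasDerivAt.const_mul ε)).deriv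
  have hvK : InKa a v := by
    have hva : v a = 1 := by simp [hv, hpa, hu1]
    refine ⟨isH1_of_ac (huc.sub (continuous_const.mul hpc)) (huL.sub (hpL.const_mul ε))
      (fun b c => (huac b c).fun_sub ((hpac b c).const_mul ε)) ?_, hva, supNorm_eq hva fun x => ?_⟩
    · refine (hud.sub (hpdL.const_mul ε)).ae_eq ?_
      filter_upwards [hvder] with x hx
      rw [hx]; rfl
    · have h1 := abs_le.1 (hub x)
      have h2 := cmpW_pos k a x
      have h3 := cmpW_le_one hk a x
      rw [abs_le]
      rcases hε with rfl | rfl <;> simp only [hv, hp, hf] <;>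
        constructor <;> rcases max_cases _ (0:ℝ) with h | h <;> rw [h.1] <;> linarith
  have hVb := ae_le_lpNorm_exponent_top hV
  have hVint : ∀ {g : ℝ → ℝ}, Integrable g → Integrable (fun x => V x * g x) := fun hg =>
    hg.bdd_mul hV.aestronglyMeasurable hVb
  have hE : ∀ {g : ℝ → ℝ}, MemLp g 2 volume → MemLp (deriv g) 2 volume →
      Integrable (fun x => deriv g x ^ 2 + V x * g x ^ 2) := fun h1 h2 =>
    h2.integrable_sq.add (hVint h1.integrable_sq)
  obtain ⟨hQI, hQ0⟩ := by_parts hk hpa hpb hpac hpL hpdL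
  have hvH := hvK.1
  have h1 := hmin v hvK
  have hPI := hE hpL hpdL
  have hUI := hE huL hud
  have h2 : IV V v ≤ ∫ x, ((deriv u x ^ 2 + V x * u x ^ 2) - (deriv p x ^ 2 + V x * p x ^ 2) -
      2 * ε * (deriv (cmpW k a) x * deriv p x + k ^ 2 * (cmpW k a x * p x))) := by
    refine integral_mono_ae (hE hvH.2.1 hvH.ac.2) ((hUI.sub hPI).sub (hQI.const_mul _)) ?_
    filter_upwards [hvder, hfder, hpder, hVε] with x hx1 hx2 hx3 hx4
    have hw := cmpW_pos k a x
    have hp0 : 0 ≤ p x := le_max_right _ _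
    have e1 : deriv p x ^ 2 = ε * (deriv u x - deriv (cmpW k a) x) * deriv p x := by
      rw [← hx2.2]
      rcases hx3 with h | h <;> rw [h] <;> ring
    have e2 : p x ^ 2 = ε * (u x - cmpW k a x) * p x := by
      simp only [hp, hf]
      rcases max_cases (ε * (u x - cmpW k a x)) (0:ℝ) with h | h <;> rw [h.1] <;> ring
    have e3 : ε * k ^ 2 * (cmpW k a x * p x) ≤ ε * V x * (cmpW k a x * p x) :=
      mul_le_mul_of_nonneg_right hx4 (by positivity)
    rw [hx1]
    simp only [hv]
    have e4 : (deriv u x - ε * deriv p x) ^ 2 = deriv u x ^ 2 - deriv p x ^ 2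
        - 2 * ε * (deriv (cmpW k a) x * deriv p x) := by
      linear_combination (deriv p x) ^ 2 * hε2 + 2 * e1
    have e5 : (u x - ε * p x) ^ 2 = u x ^ 2 - p x ^ 2 - 2 * ε * (cmpW k a x * p x) := by
      linear_combination (p x) ^ 2 * hε2 + 2 * e2
    rw [e4, e5]
    linarith
  rw [integral_sub (by exact hUI.sub hPI) (hQI.const_mul _), integral_sub hUI hPI, integral_const_mul, hQ0] at h2
  have h3 : ∫ x, (deriv p x ^ 2 + V x * p x ^ 2) ≤ 0 := by
    unfold IV at h1 h2
    linarith
  have hnn : 0 ≤ᵐ[volume] fun x => deriv p x ^ 2 + V x * p x ^ 2 := by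
    filter_upwards [hVv] with x hx
    have : 0 ≤ V x := hv0.le.trans hx
    simp only [Pi.zero_apply]
    positivity
  have h4 := (integral_eq_zero_iff_of_nonneg_ae hnn hPI).1 (le_antisymm h3 (integral_nonneg_of_ae hnn))
  have h5 : p =ᵐ[volume] fun _ => 0 := by
    filter_upwards [h4, hVv] with x hx hx2
    simp only [Pi.zero_apply] at hx
    have : 0 < V x := hv0.trans_le hx2
    by_contra hne
    have h6 : 0 < p x ^ 2 := by positivity
    nlinarith [mul_pos this h6, sq_nonneg (deriv p x)]
  have h6 : p = fun _ => 0 := (hpc.ae_eq_iff_eq volume continuous_const).1 h5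
  have h7 : p x = 0 := congrFun h6 x
  exact (le_max_left (f x) 0).trans h7.le

/-- **Pointwise exponential bounds on the minimizer.** For `V ∈ L^∞(ℝ)` with
`v₀ := ess inf V > 0`, `v₁ := ess sup V`, and `u_a` the minimizer of `‖·‖_V²` over `K_a`:
`e^{-√v₁ |x-a|} ≤ u_a(x) ≤ e^{-√v₀ |x-a|}` for all `x ∈ ℝ`. -/
theorem minimizer_exp_bounds (V : ℝ → ℝ) (hV : MemLp V ⊤ (volume : Measure ℝ))
    (hpos : 0 < essInf V (volume : Measure ℝ)) (a : ℝ)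
    (ua : ℝ → ℝ) (hua : InKa a ua)
    (hmin : ∀ u : ℝ → ℝ, InKa a u → IV V ua ≤ IV V u) :
    ∀ x : ℝ,
      Real.exp (-(Real.sqrt (essSup V (volume : Measure ℝ))) * |x - a|) ≤ ua x ∧
      ua x ≤ Real.exp (-(Real.sqrt (essInf V (volume : Measure ℝ))) * |x - a|) := by

  have hVb := ae_le_lpNorm_exponent_top hV
  have hbl : ∀ᵐ x : ℝ, essInf V volume ≤ V x := ae_essInf_le
    ⟨-lpNorm V ⊤ volume, by
      rw [eventually_map]; filter_upwards [hVb] with x hx; exact (abs_le.1 hx).1⟩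
  have hbu : ∀ᵐ x : ℝ, V x ≤ essSup V volume := ae_le_essSup
    ⟨lpNorm V ⊤ volume, by
      rw [eventually_map]; filter_upwards [hVb] with x hx; exact (abs_le.1 hx).2⟩
  have hv1 : 0 < essSup V volume := by
    obtain ⟨x, h1, h2⟩ := (hbl.and hbu).exists
    linarith
  intro x
  constructor
  · have := key V hV hpos hbl a ua hua hmin (Real.sqrt_pos.2 hv1) (ε := -1) (Or.inr rfl) (by
      filter_upwards [hbu] with y hy
      rw [Real.sq_sqrt hv1.le]; linarith) x
    unfold cmpW at this
    linarith
  · have := key V hV hpos hbl a ua hua hmin (Real.sqrt_pos.2 hpos) (ε := 1) (Or.inl rfl) (by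
      filter_upwards [hbl] with y hy
      rw [Real.sq_sqrt hpos.le]; linarith) x
    unfold cmpW at this
    linarith
end

section
/- Let V ∈ L^∞(ℝ) be a non-decreasing function with v₀ := ess inf_{x∈ℝ} V(x) > 0. Then m(V) = lim_{a→−∞} F(a;V) = 2√v₀. -/
open MeasureTheory Filter Real Topology

lemma aux_deriv {u : ℝ → ℝ} (hu : IsH1 u) :
    MemLp (deriv u) 2 (volume : Measure ℝ) ∧
      ∀ a b : ℝ, ∫ x in a..b, deriv u x * u x + u x * deriv u x = u b * u b - u a * u a := by
  obtain ⟨hc, h2, u', hu', hx⟩ := hu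
  have hloc : LocallyIntegrable u' volume := hu'.locallyIntegrable (by norm_num)
  have hux : u = fun x => u 0 + ∫ t in (0:ℝ)..x, u' t := funext hx
  have hae : ∀ᵐ x, deriv u x = u' x := by
    filter_upwards [LocallyIntegrable.ae_hasDerivAt_integral hloc] with x h
    have h1 := (h 0).const_add (u 0)
    rw [← hux] at h1
    exact h1.deriv
  refine ⟨(memLp_congr_ae hae).2 hu', fun a b => ?_⟩
  have hac : AbsolutelyContinuousOnInterval u a b := by
    have hi : ∀ p q, IntervalIntegrable u' volume p q := fun p q =>
      (hloc.integrableOn_isCompact isCompact_uIcc).intervalIntegrable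
    have h1 := (hi a b).absolutelyContinuousOnInterval_intervalIntegral (c := a) (by simp)
    have h2 : AbsolutelyContinuousOnInterval (fun _ : ℝ => u a) a b :=
      (LipschitzWith.const (u a)).lipschitzOnWith.absolutelyContinuousOnInterval
    have h3 := h2.add h1
    have : u = (fun _ : ℝ => u a) + fun x => ∫ t in a..x, u' t := by
      funext x
      simp only [Pi.add_apply]
      rw [hx x, hx a, add_assoc, intervalIntegral.integral_add_adjacent_intervals (hi _ _) (hi _ _)]
    rw [this]; exact h3
  exact hac.integral_deriv_mul_eq_sub hac

lemma aux_const {g : ℝ → ℝ} (hg : Integrable g) (S : Set ℝ) (hS : MeasurableSet S)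
    (hSv : volume S = ⊤) (k : ℝ) (h : ∀ b ∈ S, k ≤ g b) : k ≤ 0 := by
  by_contra hk
  push Not at hk
  have : IntegrableOn (fun _ : ℝ => k) S volume := by
    refine Integrable.mono' (hg.integrableOn (s := S)) (by fun_prop) ?_
    filter_upwards [ae_restrict_mem hS] with x hxS
    rw [Real.norm_of_nonneg hk.le]; exact h x hxS
  rw [integrableOn_const_iff] at this
  rcases this with h | h
  · exact hk.ne' (by simpa using h)
  · simp [hSv] at h

lemma aux_int {V u : ℝ → ℝ} {M : ℝ} (hmono : Monotone V) (hM : ∀ x, |V x| ≤ M) (hu : IsH1 u) :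
    Integrable (fun x => (deriv u x) ^ 2 + V x * (u x) ^ 2) := by
  have h1 := (aux_deriv hu).1.integrable_sq
  have h2 := hu.2.1.integrable_sq
  refine h1.add (h2.bdd_mul (c := M) hmono.measurable.aestronglyMeasurable ?_)
  exact Eventually.of_forall hM

lemma aux_lower {V u : ℝ → ℝ} {M s : ℝ} (hmono : Monotone V) (hM : ∀ x, |V x| ≤ M) (hs : 0 < s)
    (hsV : ∀ x, s ^ 2 ≤ V x) (hu : IsH1 u) (a : ℝ) : 2 * s * u a ^ 2 ≤ IV V u := by
  have hI := aux_int hmono hM hu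
  obtain ⟨hd, hp⟩ := aux_deriv hu
  have hnn : ∀ x, 0 ≤ (deriv u x) ^ 2 + V x * (u x) ^ 2 := fun x => by
    have := (sq_nonneg s).trans (hsV x); positivity
  have hprod : Integrable (fun x => deriv u x * u x + u x * deriv u x) := by
    have := hd.integrable_mul hu.2.1
    refine (this.add this).congr (Eventually.of_forall fun x => ?_)
    simp [mul_comm]
  have key : ∀ b ≤ a, ∀ c, a ≤ c → s * (2 * u a ^ 2 - u b ^ 2 - u c ^ 2) ≤ IV V u := by
    intro b hb c hc
    have e1 : s * (u a * u a - u b * u b) ≤ ∫ x in b..a, ((deriv u x) ^ 2 + V x * (u x) ^ 2) := by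
      rw [← hp b a, ← intervalIntegral.integral_const_mul]
      refine intervalIntegral.integral_mono_on hb (hprod.const_mul s).intervalIntegrable
        hI.intervalIntegrable fun x _ => ?_
      nlinarith [sq_nonneg (deriv u x - s * u x), mul_le_mul_of_nonneg_right (hsV x) (sq_nonneg (u x))]
    have e2 : (-s) * (u c * u c - u a * u a) ≤ ∫ x in a..c, ((deriv u x) ^ 2 + V x * (u x) ^ 2) := by
      rw [← hp a c, ← intervalIntegral.integral_const_mul]
      refine intervalIntegral.integral_mono_on hc (hprod.const_mul (-s)).intervalIntegrable
        hI.intervalIntegrable fun x _ => ?_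
      nlinarith [sq_nonneg (deriv u x + s * u x), mul_le_mul_of_nonneg_right (hsV x) (sq_nonneg (u x))]
    have e3 : ∫ x in b..c, ((deriv u x) ^ 2 + V x * (u x) ^ 2) ≤ IV V u := by
      rw [intervalIntegral.integral_of_le (hb.trans hc)]
      exact setIntegral_le_integral hI (Eventually.of_forall hnn)
    rw [← intervalIntegral.integral_add_adjacent_intervals (b := a) hI.intervalIntegrable
      hI.intervalIntegrable] at e3
    nlinarith
  have hsq := (hu.2.1.integrable_sq).const_mul s
  have key2 : ∀ c, a ≤ c → s * (2 * u a ^ 2 - u c ^ 2) - IV V u ≤ 0 := by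
    intro c hc
    refine aux_const hsq (Set.Iic a) measurableSet_Iic (by simp) _ fun b hb => ?_
    have := key b hb c hc
    linarith
  have := aux_const hsq (Set.Ici a) measurableSet_Ici (by simp) (s * (2 * u a ^ 2) - IV V u)
    fun c hc => by have := key2 c hc; linarith
  linarith

lemma aux_bdd {V u : ℝ → ℝ} {M s : ℝ} (hmono : Monotone V) (hM : ∀ x, |V x| ≤ M) (hs : 0 < s)
    (hsV : ∀ x, s ^ 2 ≤ V x) (hu : IsH1 u) (x : ℝ) : |u x| ≤ √(IV V u / (2 * s)) := by
  apply Real.abs_le_sqrt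
  rw [le_div_iff₀ (by positivity)]
  linarith [aux_lower hmono hM hs hsV hu x]

lemma aux_lower_sup {V u : ℝ → ℝ} {M s : ℝ} (hmono : Monotone V) (hM : ∀ x, |V x| ≤ M) (hs : 0 < s)
    (hsV : ∀ x, s ^ 2 ≤ V x) (hu : IsH1 u) : 2 * s * supNorm u ^ 2 ≤ IV V u := by
  have h1 : supNorm u ≤ √(IV V u / (2 * s)) := ciSup_le (aux_bdd hmono hM hs hsV hu)
  have h0 : 0 ≤ supNorm u := Real.iSup_nonneg fun x => abs_nonneg _
  have hI : 0 ≤ IV V u := le_trans (by positivity) (aux_lower hmono hM hs hsV hu 0)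
  have h2 : supNorm u ^ 2 ≤ IV V u / (2 * s) := by
    rw [← Real.sq_sqrt (div_nonneg hI (by positivity))]
    exact pow_le_pow_left₀ h0 h1 2
  rw [le_div_iff₀ (by positivity)] at h2
  linarith

lemma aux_sup_pos {V u : ℝ → ℝ} {M s : ℝ} (hmono : Monotone V) (hM : ∀ x, |V x| ≤ M) (hs : 0 < s)
    (hsV : ∀ x, s ^ 2 ≤ V x) (hu : IsH1 u) (h0 : u ≠ 0) : 0 < supNorm u := by
  obtain ⟨x, hx⟩ := Function.ne_iff.1 h0
  refine lt_of_lt_of_le (abs_pos.2 hx) (le_ciSup (f := fun x => |u x|) ⟨√(IV V u / (2 * s)), ?_⟩ x)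
  rintro _ ⟨y, rfl⟩
  exact aux_bdd hmono hM hs hsV hu y

/-- the test function -/
noncomputable def tst (s a x : ℝ) : ℝ := Real.exp (-s * |x - a|)

lemma tst_deriv {s a x : ℝ} (hx : x ≠ a) :
    HasDerivAt (tst s a) (tst s a x * (-s * SignType.sign (x - a))) x := by
  have h := (((hasDerivAt_abs (sub_ne_zero.2 hx)).comp x ((hasDerivAt_id x).sub_const a)).const_mul (-s)).exp
  have e : tst s a = fun x => Real.exp (-s * |x - a|) := rfl
  rw [e]
  simpa [Function.comp_def] using h

lemma exp_abs_int {t : ℝ} (ht : 0 < t) : Integrable (fun x : ℝ => Real.exp (-t * |x|)) := by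
  by_contra h
  have h1 := integral_comp_abs (f := fun x => Real.exp (-t * x))
  rw [integral_undef h, integral_exp_mul_Ioi (by linarith)] at h1
  simp at h1
  exact ht.ne' h1

lemma exp_abs_integral {t : ℝ} (ht : 0 < t) : ∫ x : ℝ, Real.exp (-t * |x|) = 2 / t := by
  rw [integral_comp_abs (f := fun x => Real.exp (-t * x)), integral_exp_mul_Ioi (by linarith)]
  simp; ring

lemma tst_sq (s a x : ℝ) : tst s a x ^ 2 = Real.exp (-(2 * s) * |x - a|) := by
  rw [tst, ← Real.exp_nat_mul]; congr 1; push_cast; ring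

lemma tst_cont (s a : ℝ) : Continuous (tst s a) := by unfold tst; fun_prop

lemma tst_memLp {s : ℝ} (hs : 0 < s) (a : ℝ) : MemLp (tst s a) 2 (volume : Measure ℝ) := by
  rw [memLp_two_iff_integrable_sq (tst_cont s a).aestronglyMeasurable]
  simp_rw [tst_sq]
  exact (exp_abs_int (t := 2 * s) (by positivity)).comp_sub_right a

lemma tst_H1 {s : ℝ} (hs : 0 < s) (a : ℝ) : IsH1 (tst s a) := by
  have hm : MemLp (fun x => tst s a x * (-s * SignType.sign (x - a))) 2 (volume : Measure ℝ) := by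
    refine MemLp.of_le_mul (c := s) (tst_memLp hs a) ?_ (Eventually.of_forall fun x => ?_)
    · refine ((tst_cont s a).measurable.mul (measurable_const.mul ?_)).aestronglyMeasurable
      have : Measurable (fun x : ℝ => if 0 < x - a then (1:ℝ) else if x - a < 0 then -1 else 0) := by
        refine Measurable.ite (measurableSet_lt measurable_const (by fun_prop)) measurable_const
          (Measurable.ite (measurableSet_lt (by fun_prop) measurable_const) measurable_const measurable_const)
      convert this using 2 with x
      simp only [sign_apply]
      split_ifs <;> simp
    · rw [norm_mul, norm_mul, norm_neg, Real.norm_of_nonneg hs.le]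
      have : ‖((SignType.sign (x - a) : SignType) : ℝ)‖ ≤ 1 := by
        cases SignType.sign (x - a) <;> simp
      have h2 := norm_nonneg (tst s a x)
      nlinarith [mul_le_mul_of_nonneg_left this (mul_nonneg h2 hs.le)]
  refine ⟨tst_cont s a, tst_memLp hs a, _, hm, fun x => ?_⟩
  rw [integral_eq_of_hasDerivAt_off_countable (tst s a) _ (s := {a}) (Set.countable_singleton a)
    (tst_cont s a).continuousOn (fun y hy => tst_deriv hy.2)]
  · ring
  · exact ((hm.locallyIntegrable (by norm_num)).integrableOn_isCompact
      isCompact_uIcc).intervalIntegrable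

lemma tst_self (s a : ℝ) : tst s a a = 1 := by simp [tst]

lemma tst_sup {s : ℝ} (hs : 0 < s) (a : ℝ) : supNorm (tst s a) = 1 := by
  have hb : ∀ x, |tst s a x| ≤ 1 := fun x => by
    rw [tst, abs_of_pos (Real.exp_pos _), Real.exp_le_one_iff]
    nlinarith [abs_nonneg (x - a)]
  apply le_antisymm (ciSup_le hb)
  refine le_trans ?_ (le_ciSup (f := fun x => |tst s a x|) ⟨1, ?_⟩ a)
  · simp [tst_self]
  · rintro _ ⟨y, rfl⟩; exact hb y

lemma tst_IV {V : ℝ → ℝ} (s a : ℝ) :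
    IV V (tst s a) = ∫ y, (s ^ 2 + V (y + a)) * Real.exp (-(2 * s) * |y|) := by
  rw [← integral_sub_right_eq_self (fun y => (s ^ 2 + V (y + a)) * Real.exp (-(2 * s) * |y|)) a]
  apply integral_congr_ae
  have : ∀ᵐ x : ℝ, x ≠ a := by simp [ae_iff]
  filter_upwards [this] with x hx
  rw [(tst_deriv hx).deriv, mul_pow, mul_pow, tst_sq, sub_add_cancel]
  have : ((SignType.sign (x - a) : SignType) : ℝ) ^ 2 = 1 := by
    rcases lt_or_gt_of_ne hx with h | h
    · simp [sign_neg (sub_neg.2 h)]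
    · simp [sign_pos (sub_pos.2 h)]
  rw [this]; ring

lemma tst_tendsto {V : ℝ → ℝ} {M s : ℝ} (hmono : Monotone V) (hM : ∀ x, |V x| ≤ M) (hs : 0 < s)
    (hlim : Tendsto V atBot (𝓝 (s ^ 2))) :
    Tendsto (fun a => IV V (tst s a)) atBot (𝓝 (2 * s)) := by
  simp_rw [tst_IV]
  have : 2 * s = ∫ y : ℝ, (s ^ 2 + s ^ 2) * Real.exp (-(2 * s) * |y|) := by
    rw [integral_const_mul, exp_abs_integral (by positivity)]; field_simp; ring
  suffices h : Tendsto (fun a => ∫ y, (s ^ 2 + V (y + a)) * Real.exp (-(2 * s) * |y|)) atBot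
      (𝓝 (∫ y : ℝ, (s ^ 2 + s ^ 2) * Real.exp (-(2 * s) * |y|))) by rwa [← this] at h
  refine tendsto_integral_filter_of_dominated_convergence
    (fun y => (s ^ 2 + M) * Real.exp (-(2 * s) * |y|)) ?_ ?_
    ((exp_abs_int (by positivity)).const_mul _) ?_
  · refine Eventually.of_forall fun a => Measurable.aestronglyMeasurable ?_
    have : Measurable fun y => V (y + a) := hmono.measurable.comp (by fun_prop)
    have h2 : Measurable fun y : ℝ => Real.exp (-(2 * s) * |y|) :=
      Continuous.measurable (by fun_prop)
    exact (measurable_const.add this).mul h2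
  · refine Eventually.of_forall fun a => Eventually.of_forall fun y => ?_
    rw [norm_mul, Real.norm_of_nonneg (Real.exp_pos _).le]
    gcongr
    refine (norm_add_le _ _).trans ?_
    rw [Real.norm_of_nonneg (sq_nonneg s)]
    gcongr
    exact hM _
  · refine Eventually.of_forall fun y => ?_
    refine (tendsto_const_nhds.add (hlim.comp ?_)).mul_const _
    exact tendsto_atBot_add_const_left _ y tendsto_id

/-- **Non-decreasing potentials.** If `V ∈ L^∞(ℝ)` is non-decreasing with
`v₀ := ess inf V > 0`, then `m(V) = lim_{a → -∞} F(a;V) = 2√v₀`. -/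
theorem mV_of_monotone (V : ℝ → ℝ) (hV : MemLp V ⊤ (volume : Measure ℝ))
    (hmono : Monotone V) (hpos : 0 < essInf V (volume : Measure ℝ)) :
    Tendsto (fun a : ℝ => FV V a) atBot
        (𝓝 (2 * Real.sqrt (essInf V (volume : Measure ℝ)))) ∧
      mV V = 2 * Real.sqrt (essInf V (volume : Measure ℝ)) := by
  obtain ⟨M, hMae⟩ : ∃ M, ∀ᵐ x, |V x| ≤ M :=
    ⟨_, by simpa using ae_le_lpNorm_exponent_top hV⟩
  have hbelow : IsBoundedUnder (· ≥ ·) (ae (volume : Measure ℝ)) V :=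
    ⟨-M, by simpa using hMae.mono fun x hx => (abs_le.1 hx).1⟩
  have habove : IsBoundedUnder (· ≤ ·) (ae (volume : Measure ℝ)) V :=
    ⟨M, by simpa using hMae.mono fun x hx => (abs_le.1 hx).2⟩
  have hinf := ae_essInf_le hbelow
  have hset : ∀ (P : ℝ → Prop), (∀ᵐ x, P x) → ∀ S : Set ℝ, volume S = ⊤ → ∃ x ∈ S, P x := by
    intro P hP S hS
    by_contra hcon
    push Not at hcon
    have : volume S = 0 := measure_mono_null (fun x hx => hcon x hx) hP
    simp [this] at hS
  have hM : ∀ x, |V x| ≤ M := by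
    intro x
    obtain ⟨y, hy, hyM⟩ := hset _ hMae (Set.Iic x) (by simp)
    obtain ⟨z, hz, hzM⟩ := hset _ hMae (Set.Ici x) (by simp)
    rw [abs_le] at *
    exact ⟨hyM.1.trans (hmono hy), (hmono hz).trans hzM.2⟩
  have hv0 : ∀ x, essInf V (volume : Measure ℝ) ≤ V x := by
    intro x
    obtain ⟨y, hy, hyM⟩ := hset _ hinf (Set.Iic x) (by simp)
    exact hyM.trans (hmono hy)
  have hlim : Tendsto V atBot (𝓝 (essInf V (volume : Measure ℝ))) := by
    refine tendsto_order.2 ⟨fun c hc => Eventually.of_forall fun x => hc.trans_le (hv0 x), ?_⟩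
    intro c hc
    have : ∃ x, V x < c := by
      by_contra hcon
      push Not at hcon
      have := le_essInf_of_ae_le (μ := (volume : Measure ℝ)) c (Eventually.of_forall hcon)
        habove.isCoboundedUnder_ge
      exact absurd this (not_le.2 hc)
    obtain ⟨x, hx⟩ := this
    filter_upwards [eventually_le_atBot x] with y hy
    exact (hmono hy).trans_lt hx
  generalize essInf V (volume : Measure ℝ) = v at *
  obtain ⟨s, hs, rfl⟩ : ∃ s, 0 < s ∧ v = s ^ 2 :=
    ⟨√v, Real.sqrt_pos.2 hpos, (Real.sq_sqrt hpos.le).symm⟩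
  rw [Real.sqrt_sq hs.le]
  have ht := tst_tendsto hmono hM hs hlim
  have hlow : ∀ a, 2 * s ∈ lowerBounds {r : ℝ | ∃ u : ℝ → ℝ, InKa a u ∧ r = IV V u} := by
    rintro a _ ⟨u, ⟨hu, -, h1⟩, rfl⟩
    have := aux_lower_sup hmono hM hs hv0 hu
    simpa [h1] using this
  have hmem : ∀ a, IV V (tst s a) ∈ {r : ℝ | ∃ u : ℝ → ℝ, InKa a u ∧ r = IV V u} :=
    fun a => ⟨_, ⟨tst_H1 hs a, tst_self s a, tst_sup hs a⟩, rfl⟩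
  have hlow2 : 2 * s ∈ lowerBounds
      {r : ℝ | ∃ u : ℝ → ℝ, IsH1 u ∧ u ≠ 0 ∧ r = IV V u / (supNorm u) ^ 2} := by
    rintro _ ⟨u, hu, h0, rfl⟩
    have hp := aux_sup_pos hmono hM hs hv0 hu h0
    rw [le_div_iff₀ (by positivity)]
    exact aux_lower_sup hmono hM hs hv0 hu
  have hmem2 : ∀ a, IV V (tst s a) ∈
      {r : ℝ | ∃ u : ℝ → ℝ, IsH1 u ∧ u ≠ 0 ∧ r = IV V u / (supNorm u) ^ 2} := by
    intro a
    refine ⟨_, tst_H1 hs a, fun h => ?_, by rw [tst_sup hs a]; simp⟩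
    have := congrFun h a
    simp [tst_self] at this
  constructor
  · exact tendsto_of_tendsto_of_tendsto_of_le_of_le tendsto_const_nhds ht
      (fun a => le_csInf ⟨_, hmem a⟩ (hlow a)) (fun a => csInf_le ⟨_, hlow a⟩ (hmem a))
  · apply le_antisymm
    · exact ge_of_tendsto' ht fun a => csInf_le ⟨_, hlow2⟩ (hmem2 a)
    · exact le_csInf ⟨_, hmem2 0⟩ hlow2
end

section
/- Let V ∈ L^∞(ℝ) be a non-decreasing function with 0 < v₀ := ess inf_{x∈ℝ} V(x) < v₁ := ess sup_{x∈ℝ} V(x). Then a ↦ F(a;V) is a strictly increasing function on ℝ, and the infimum m(V) is not attained, i.e., there is no u ∈ H¹(ℝ)∖{0} with I(u;V)/‖u‖_∞² = m(V). -/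
open MeasureTheory Filter Real Topology

def ACR (u : ℝ → ℝ) : Prop := ∀ a b : ℝ, AbsolutelyContinuousOnInterval u a b

lemma ACR.cont {u : ℝ → ℝ} (h : ACR u) : Continuous u := by
  rw [continuous_iff_continuousAt]
  intro x
  have := (h (x-1) (x+1)).continuousOn
  rw [Set.uIcc_of_le (by linarith)] at this
  exact this.continuousAt (Icc_mem_nhds (by linarith) (by linarith))

lemma ACR.ae_diff {u : ℝ → ℝ} (h : ACR u) : ∀ᵐ x : ℝ, DifferentiableAt ℝ u x := by
  have : ∀ᵐ x : ℝ, ∀ n : ℕ, x ∈ Set.uIcc (-(n:ℝ)) n → DifferentiableAt ℝ u x := by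
    rw [ae_all_iff]
    intro n
    exact (h _ _).ae_differentiableAt
  filter_upwards [this] with x hx
  obtain ⟨n, hn⟩ := exists_nat_ge |x|
  refine hx n ?_
  have := abs_le.1 hn
  rw [Set.uIcc_of_le (by linarith)]
  exact this

lemma ACR.sub {u v : ℝ → ℝ} (h : ACR u) (h' : ACR v) : ACR (fun x => u x - v x) :=
  fun a b => (h a b).fun_sub (h' a b)

lemma ACR.mul {u v : ℝ → ℝ} (h : ACR u) (h' : ACR v) : ACR (fun x => u x * v x) :=
  fun a b => (h a b).fun_mul (h' a b)

lemma ACR.max {u v : ℝ → ℝ} (h : ACR u) (h' : ACR v) : ACR (fun x => max (u x) (v x)) := by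
  intro a b
  have hf := h a b
  have hg := h' a b
  unfold AbsolutelyContinuousOnInterval at *
  apply squeeze_zero (fun t ↦ ?_) (fun t ↦ ?_) (by simpa using Tendsto.add hf hg)
  · exact Finset.sum_nonneg (fun i hi ↦ by positivity)
  · rw [← Finset.sum_add_distrib]
    gcongr with i hi
    simp only [Real.dist_eq]
    refine (abs_max_sub_max_le_max _ _ _ _).trans ?_
    exact max_le (by linarith [abs_nonneg (v (t.2 i).1 - v (t.2 i).2)])
      (by linarith [abs_nonneg (u (t.2 i).1 - u (t.2 i).2)])

lemma isH1_iff (u : ℝ → ℝ) : IsH1 u ↔ ACR u ∧ MemLp u 2 (volume : Measure ℝ) ∧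
    MemLp (deriv u) 2 (volume : Measure ℝ) := by
  constructor
  · rintro ⟨hc, hu, u', hu', hf⟩
    have hli : LocallyIntegrable u' volume := hu'.locallyIntegrable (by norm_num)
    have hE : u = fun x => u 0 + ∫ t in (0:ℝ)..x, u' t := funext hf
    have hd : ∀ᵐ x : ℝ, HasDerivAt u (u' x) x := by
      filter_upwards [_root_.LocallyIntegrable.ae_hasDerivAt_integral hli] with x hx
      rw [hE]
      exact (hx 0).const_add (u 0)
    refine ⟨?_, hu, ?_⟩
    · intro a b
      have hm : 0 ≤ |a| + |b| := by positivity
      have h1 : AbsolutelyContinuousOnInterval u (-(|a|+|b|)) (|a|+|b|) := by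
        have hi : IntervalIntegrable u' volume (-(|a|+|b|)) (|a|+|b|) :=
          intervalIntegrable_iff.mpr <|
            (hli.integrableOn_isCompact isCompact_uIcc).mono_set Set.uIoc_subset_uIcc
        have h2 := hi.absolutelyContinuousOnInterval_intervalIntegral (c := 0)
          (by rw [Set.uIcc_of_le (by linarith)]; constructor <;> linarith)
        have h3 : AbsolutelyContinuousOnInterval (fun _ : ℝ => u 0) (-(|a|+|b|)) (|a|+|b|) :=
          (LipschitzWith.const (u 0)).lipschitzOnWith.absolutelyContinuousOnInterval
        rw [hE]
        exact h3.fun_add h2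
      refine h1.mono ?_
      rw [Set.uIcc_of_le (by linarith : -(|a|+|b|) ≤ |a|+|b|)]
      apply Set.uIcc_subset_Icc
      · constructor <;> linarith [abs_nonneg b, neg_abs_le a, le_abs_self a]
      · constructor <;> linarith [abs_nonneg a, neg_abs_le b, le_abs_self b]
    · refine hu'.ae_eq ?_
      filter_upwards [hd] with x hx
      exact hx.deriv.symm
  · rintro ⟨h, hu, hd⟩
    refine ⟨h.cont, hu, deriv u, hd, fun x => ?_⟩
    rw [(h 0 x).integral_deriv_eq_sub]; ring

lemma integral_Ioi_ACR {g : ℝ → ℝ} (h : ACR g) (b : ℝ) (hi : Integrable (deriv g))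
    {l : ℝ} (ht : Tendsto g atTop (𝓝 l)) : ∫ x in Set.Ioi b, deriv g x = l - g b := by
  have h1 := intervalIntegral_tendsto_integral_Ioi b hi.integrableOn tendsto_id
  refine tendsto_nhds_unique h1 ?_
  simp only [id, fun x => (h b x).integral_deriv_eq_sub]
  exact ht.sub_const _

lemma integral_Iic_ACR {g : ℝ → ℝ} (h : ACR g) (b : ℝ) (hi : Integrable (deriv g))
    {l : ℝ} (ht : Tendsto g atBot (𝓝 l)) : ∫ x in Set.Iic b, deriv g x = g b - l := by
  have h1 := intervalIntegral_tendsto_integral_Iic b hi.integrableOn tendsto_id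
  refine tendsto_nhds_unique h1 ?_
  simp only [id, fun x => (h x b).integral_deriv_eq_sub]
  exact ht.const_sub _

lemma deriv_eq_of_touch {w u : ℝ → ℝ} {x : ℝ} (hw : DifferentiableAt ℝ w x)
    (hu : DifferentiableAt ℝ u x) (hle : ∀ y, u y ≤ w y) (he : w x = u x) :
    deriv w x = deriv u x := by
  have : IsLocalMin (fun y => w y - u y) x := by
    refine Filter.Eventually.of_forall fun y => ?_
    simp only [he, sub_self]; linarith [hle y]
  have h1 := this.hasDerivAt_eq_zero (hw.hasDerivAt.sub hu.hasDerivAt)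
  linarith

noncomputable def et (k b : ℝ) (x : ℝ) : ℝ := Real.exp (-(k * |x - b|))

lemma et_pos (k b x : ℝ) : 0 < et k b x := Real.exp_pos _

lemma et_self (k b : ℝ) : et k b b = 1 := by simp [et]

lemma et_le {k : ℝ} (hk : 0 < k) (b x : ℝ) : et k b x ≤ 1 := by
  unfold et; rw [Real.exp_le_one_iff]
  have : 0 ≤ k * |x - b| := by positivity
  linarith

lemma et_ac {k : ℝ} (hk : 0 < k) (b : ℝ) : ACR (et k b) := by
  have h1 : LipschitzOnWith 1 Real.exp (Set.Iic 0) := by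
    apply Convex.lipschitzOnWith_of_nnnorm_deriv_le (fun x _ => Real.differentiableAt_exp) _ (convex_Iic 0)
    intro x hx
    rw [← NNReal.coe_le_coe]
    simpa using hx
  have h2 : LipschitzWith ⟨k, hk.le⟩ (fun x : ℝ => -(k * |x - b|)) := by
    apply LipschitzWith.of_dist_le_mul
    intro x y
    simp only [Real.dist_eq]
    rw [show -(k * |x - b|) - -(k * |y - b|) = k * (|y - b| - |x - b|) by ring, abs_mul, abs_of_pos hk]
    refine mul_le_mul_of_nonneg_left ?_ hk.le
    refine (abs_abs_sub_abs_le (y - b) (x - b)).trans ?_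
    rw [abs_sub_comm x y]; apply le_of_eq; congr 1; ring
  have h3 : LipschitzWith (1 * ⟨k, hk.le⟩) (et k b) := by
    rw [← lipschitzOnWith_univ]
    refine h1.comp (h2.lipschitzOnWith) ?_
    intro x _
    have : 0 ≤ k * |x - b| := by positivity
    simp [this]
  exact fun x y => h3.lipschitzOnWith.absolutelyContinuousOnInterval

lemma et_deriv_gt {k b x : ℝ} (hx : b < x) : deriv (et k b) x = -k * et k b x := by
  have : (et k b) =ᶠ[𝓝 x] fun y => Real.exp (-(k * (y - b))) := by
    filter_upwards [Ioi_mem_nhds hx] with y hy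
    simp only [et]; rw [abs_of_pos (sub_pos.2 hy)]
  rw [this.deriv_eq, this.eq_of_nhds]
  have h : HasDerivAt (fun y => Real.exp (-(k * (y - b)))) (Real.exp (-(k * (x - b))) * -(k * 1)) x :=
    ((((hasDerivAt_id x).sub_const b).const_mul k).neg).exp
  rw [HasDerivAt.deriv h]; ring

lemma et_deriv_lt {k b x : ℝ} (hx : x < b) : deriv (et k b) x = k * et k b x := by
  have : (et k b) =ᶠ[𝓝 x] fun y => Real.exp (-(k * (-(y - b)))) := by
    filter_upwards [Iio_mem_nhds hx] with y hy
    simp only [et]; rw [abs_of_neg (sub_neg.2 hy)]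
  rw [this.deriv_eq, this.eq_of_nhds]
  have h : HasDerivAt (fun y => Real.exp (-(k * (-(y - b)))))
      (Real.exp (-(k * (-(x - b)))) * -(k * -1)) x :=
    (((((hasDerivAt_id x).sub_const b).neg).const_mul k).neg).exp
  rw [HasDerivAt.deriv h]; ring

lemma et_tendsto_top {k : ℝ} (hk : 0 < k) (b : ℝ) : Tendsto (et k b) atTop (𝓝 0) := by
  unfold et
  refine Real.tendsto_exp_atBot.comp (tendsto_neg_atTop_atBot.comp ?_)
  refine Tendsto.const_mul_atTop hk (tendsto_abs_atTop_atTop.comp ?_)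
  exact tendsto_atTop_add_const_right _ (-b) tendsto_id

lemma et_tendsto_bot {k : ℝ} (hk : 0 < k) (b : ℝ) : Tendsto (et k b) atBot (𝓝 0) := by
  unfold et
  refine Real.tendsto_exp_atBot.comp (tendsto_neg_atTop_atBot.comp ?_)
  refine Tendsto.const_mul_atTop hk (tendsto_abs_atBot_atTop.comp ?_)
  exact tendsto_atBot_add_const_right _ (-b) tendsto_id

lemma et_int {k : ℝ} (hk : 0 < k) (b : ℝ) : Integrable (et k b) := by
  have h0 : Integrable (fun x : ℝ => Real.exp (-(k * |x|))) := by
    rw [← integrableOn_univ, ← Set.Iic_union_Ioi (a := (0:ℝ)), integrableOn_union]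
    constructor
    · refine (integrableOn_exp_mul_Iic hk 0).congr_fun (fun x hx => ?_) measurableSet_Iic
      simp only; rw [abs_of_nonpos hx]; congr 1; ring
    · refine (integrableOn_exp_mul_Ioi (neg_lt_zero.2 hk) 0).congr_fun (fun x hx => ?_)
        measurableSet_Ioi
      simp only; rw [abs_of_pos hx]; congr 1; ring
  exact h0.comp_sub_right b

lemma et_L2 {k : ℝ} (hk : 0 < k) (b : ℝ) : MemLp (et k b) 2 (volume : Measure ℝ) := by
  rw [memLp_two_iff_integrable_sq (et_ac hk b).cont.aestronglyMeasurable]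
  have : (fun x => et k b x ^ 2) = et (2*k) b := by
    ext x; simp only [et]; rw [← Real.exp_nat_mul]; congr 1; push_cast; ring
  rw [this]; exact et_int (by linarith) b

lemma et_H1 {k : ℝ} (hk : 0 < k) (b : ℝ) : IsH1 (et k b) := by
  rw [isH1_iff]
  refine ⟨et_ac hk b, et_L2 hk b, ?_⟩
  refine (et_L2 hk b).of_le_mul (c := k) (measurable_deriv _).aestronglyMeasurable ?_
  have : ∀ᵐ x : ℝ, x ≠ b := by simp [ae_iff, measure_singleton]
  filter_upwards [this] with x hx
  rcases lt_or_gt_of_ne hx with h | h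
  · rw [et_deriv_lt h, norm_mul]; simp [abs_of_pos hk]
  · rw [et_deriv_gt h, norm_mul]; simp [abs_of_pos hk]

lemma supNorm_le {u : ℝ → ℝ} (h : BddAbove (Set.range fun x => |u x|)) (x : ℝ) :
    |u x| ≤ supNorm u := le_ciSup h x

lemma InKa.le {a : ℝ} {u : ℝ → ℝ} (h : InKa a u) (x : ℝ) : |u x| ≤ 1 := by
  have hs := h.2.2
  by_cases hb : BddAbove (Set.range fun x => |u x|)
  · rw [← hs]; exact supNorm_le hb x
  · rw [supNorm, Real.iSup_of_not_bddAbove hb] at hs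
    norm_num at hs

lemma mkKa {a : ℝ} {u : ℝ → ℝ} (h : IsH1 u) (ha : u a = 1) (hl : ∀ x, |u x| ≤ 1) : InKa a u := by
  refine ⟨h, ha, le_antisymm (ciSup_le hl) ?_⟩
  have := supNorm_le (u := u) ⟨1, by rintro _ ⟨x, rfl⟩; exact hl x⟩ a
  rwa [ha, abs_one] at this

lemma int_IV {V u : ℝ → ℝ} {C : ℝ} (hm : Monotone V) (hC : ∀ x, |V x| ≤ C) (hu : IsH1 u) :
    Integrable (fun x => (deriv u x) ^ 2 + V x * (u x) ^ 2) := by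
  rw [isH1_iff] at hu
  refine hu.2.2.integrable_sq.add ?_
  refine hu.2.1.integrable_sq.bdd_mul (c := C) hm.measurable.aestronglyMeasurable ?_
  exact Eventually.of_forall hC

lemma max_H1 {u v : ℝ → ℝ} (hu : IsH1 u) (hv : IsH1 v) : IsH1 (fun x => max (u x) (v x)) := by
  rw [isH1_iff] at *
  have hac := hu.1.max hv.1
  refine ⟨hac, hu.2.1.sup hv.2.1, ?_⟩
  refine (hu.2.2.norm.add hv.2.2.norm).mono (measurable_deriv _).aestronglyMeasurable ?_
  filter_upwards [hu.1.ae_diff, hv.1.ae_diff, hac.ae_diff] with x h1 h2 h3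
  have e : ‖(fun x => ‖deriv u x‖) x + (fun x => ‖deriv v x‖) x‖ = ‖deriv u x‖ + ‖deriv v x‖ := by
    simp only
    rw [Real.norm_of_nonneg (by positivity)]
  refine le_of_le_of_eq ?_ e.symm
  rcases le_total (u x) (v x) with h | h
  · rw [deriv_eq_of_touch h3 h2 (fun y => le_max_right _ _) (max_eq_right h)]
    linarith [norm_nonneg (deriv u x)]
  · rw [deriv_eq_of_touch h3 h1 (fun y => le_max_left _ _) (max_eq_left h)]
    linarith [norm_nonneg (deriv v x)]

lemma max_energy {V u : ℝ → ℝ} {C k b : ℝ} (hm : Monotone V) (hC : ∀ x, |V x| ≤ C)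
    (h0 : ∀ x, 0 ≤ V x) (hk : 0 < k) (hVk : ∀ x, V x ≤ k ^ 2) (hu : InKa b u) :
    IV V (fun x => max (u x) (et k b x)) ≤ IV V u := by
  set w : ℝ → ℝ := fun x => max (u x) (et k b x) with hw
  have hH := max_H1 hu.1 (et_H1 hk b)
  have iw : Integrable (fun x => (deriv w x) ^ 2 + V x * (w x) ^ 2) := int_IV hm hC hH
  have iu := int_IV hm hC hu.1
  have Hw := (isH1_iff _).1 hH
  have Hu := (isH1_iff _).1 hu.1
  have He := (isH1_iff _).1 (et_H1 hk b)
  have hub : ∀ x, |w x - u x| ≤ 2 := by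
    intro x
    have h1 := abs_le.1 (hu.le x)
    have h2 := et_le hk b x
    have h3 : w x ≤ 1 := max_le h1.2 h2
    have h4 : u x ≤ w x := le_max_left _ _
    rw [abs_of_nonneg (by linarith)]; linarith
  have hacp := Hw.1.sub Hu.1
  have hacg := He.1.mul hacp
  have hdg : ∀ᵐ x, deriv (fun x => et k b x * (w x - u x)) x =
      deriv (et k b) x * (w x - u x) + et k b x * (deriv w x - deriv u x) := by
    filter_upwards [He.1.ae_diff, Hw.1.ae_diff, Hu.1.ae_diff] with x h1 h2 h3
    exact (h1.hasDerivAt.mul (h2.hasDerivAt.sub h3.hasDerivAt)).deriv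
  have hig : Integrable (deriv (fun x => et k b x * (w x - u x))) := by
    have : Integrable (fun x => deriv (et k b) x * (w x - u x) +
        et k b x * (deriv w x - deriv u x)) :=
      (He.2.2.integrable_mul (Hw.2.1.sub Hu.2.1)).add
        (He.2.1.integrable_mul (Hw.2.2.sub Hu.2.2))
    refine this.congr ?_
    filter_upwards [hdg] with x hx using hx.symm
  have hgb : (fun x => et k b x * (w x - u x)) b = 0 := by
    simp only [hw, hu.2.1, et_self]; norm_num
  have htt : Tendsto (fun x => et k b x * (w x - u x)) atTop (𝓝 0) := by
    refine (et_tendsto_top hk b).zero_mul_isBoundedUnder_le ?_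
    exact isBoundedUnder_of ⟨2, hub⟩
  have htb : Tendsto (fun x => et k b x * (w x - u x)) atBot (𝓝 0) := by
    refine (et_tendsto_bot hk b).zero_mul_isBoundedUnder_le ?_
    exact isBoundedUnder_of ⟨2, hub⟩
  have I1 : ∫ x in Set.Ioi b, deriv (fun x => et k b x * (w x - u x)) x =
      0 - (fun x => et k b x * (w x - u x)) b := integral_Ioi_ACR hacg b hig htt
  have I2 : ∫ x in Set.Iic b, deriv (fun x => et k b x * (w x - u x)) x =
      (fun x => et k b x * (w x - u x)) b - 0 := integral_Iic_ACR hacg b hig htb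
  rw [hgb] at I1 I2
  have hne : ∀ᵐ x : ℝ, x ≠ b := by simp [ae_iff, measure_singleton]
  have key : ∀ᵐ x : ℝ, (b < x → (deriv w x) ^ 2 + V x * (w x) ^ 2
        - ((deriv u x) ^ 2 + V x * (u x) ^ 2) ≤
          (-(2 * k)) * deriv (fun x => et k b x * (w x - u x)) x) ∧
      (x ≤ b → (deriv w x) ^ 2 + V x * (w x) ^ 2
        - ((deriv u x) ^ 2 + V x * (u x) ^ 2) ≤
          (2 * k) * deriv (fun x => et k b x * (w x - u x)) x) := by
    filter_upwards [He.1.ae_diff, Hw.1.ae_diff, Hu.1.ae_diff, hdg, hne] with x h1 h2 h3 h4 h5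
    rw [h4]
    rcases le_total (u x) (et k b x) with h | h
    · have ew : w x = et k b x := max_eq_right h
      rw [deriv_eq_of_touch h2 h1 (fun y => le_max_right _ _) ew, ew]
      have hp := et_pos k b x
      have q1 : 0 ≤ (k ^ 2 - V x) * (et k b x * (et k b x - u x)) :=
        mul_nonneg (sub_nonneg.2 (hVk x)) (mul_nonneg hp.le (sub_nonneg.2 h))
      have q2 : 0 ≤ V x * (et k b x - u x) ^ 2 := mul_nonneg (h0 x) (sq_nonneg _)
      have q3 := sq_nonneg (deriv (et k b) x - deriv u x)
      constructor
      · intro hx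
        rw [et_deriv_gt hx] at *
        nlinarith
      · intro hx
        rw [et_deriv_lt (lt_of_le_of_ne hx h5)] at *
        nlinarith
    · have ew : w x = u x := max_eq_left h
      rw [deriv_eq_of_touch h2 h3 (fun y => le_max_left _ _) ew, ew]
      constructor <;> intro _ <;> simp
  have idf : Integrable (fun x => (deriv w x) ^ 2 + V x * (w x) ^ 2
      - ((deriv u x) ^ 2 + V x * (u x) ^ 2)) := iw.sub iu
  have : IV V w - IV V u ≤ 0 := by
    unfold IV
    rw [← integral_sub iw iu, ← intervalIntegral.integral_Iic_add_Ioi (b := b)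
      idf.integrableOn idf.integrableOn]
    have J1 : ∫ x in Set.Ioi b, ((deriv w x) ^ 2 + V x * (w x) ^ 2
        - ((deriv u x) ^ 2 + V x * (u x) ^ 2)) ≤
        ∫ x in Set.Ioi b, (-(2 * k)) * deriv (fun x => et k b x * (w x - u x)) x := by
      refine setIntegral_mono_on_ae idf.integrableOn (hig.const_mul _).integrableOn
        measurableSet_Ioi ?_
      filter_upwards [key] with x hx using hx.1
    have J2 : ∫ x in Set.Iic b, ((deriv w x) ^ 2 + V x * (w x) ^ 2
        - ((deriv u x) ^ 2 + V x * (u x) ^ 2)) ≤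
        ∫ x in Set.Iic b, (2 * k) * deriv (fun x => et k b x * (w x - u x)) x := by
      refine setIntegral_mono_on_ae idf.integrableOn (hig.const_mul _).integrableOn
        measurableSet_Iic ?_
      filter_upwards [key] with x hx using hx.2
    rw [integral_const_mul, I1] at J1
    rw [integral_const_mul, I2] at J2
    linarith
  linarith

lemma shift_H1 {u : ℝ → ℝ} (h : ℝ) (hu : IsH1 u) : IsH1 (fun x => u (x + h)) := by
  obtain ⟨hc, hL, u', hu', hf⟩ := hu
  have mp : MeasurePreserving (fun x : ℝ => x + h) volume volume :=
    measurePreserving_add_right volume h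
  refine ⟨by fun_prop, hL.comp_measurePreserving mp, fun x => u' (x + h),
    hu'.comp_measurePreserving mp, fun x => ?_⟩
  have hli : LocallyIntegrable u' volume := hu'.locallyIntegrable (by norm_num)
  have hi : ∀ a b, IntervalIntegrable u' volume a b := fun a b =>
    intervalIntegrable_iff.mpr <|
      (hli.integrableOn_isCompact isCompact_uIcc).mono_set Set.uIoc_subset_uIcc
  beta_reduce
  rw [intervalIntegral.integral_comp_add_right, hf (x + h), hf (0 + h),
    ← intervalIntegral.integral_add_adjacent_intervals (hi 0 (0 + h)) (hi (0 + h) (x + h))]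
  ring

lemma shift_IV {V u : ℝ → ℝ} (h : ℝ) : IV V (fun x => u (x + h)) =
    IV (fun x => V (x - h)) u := by
  unfold IV
  rw [← integral_add_right_eq_self (fun x => (deriv u x) ^ 2 + V (x - h) * (u x) ^ 2) h]
  congr 1; ext x
  rw [deriv_comp_add_const]; simp

lemma tendsto_zero_H1 {u : ℝ → ℝ} (hu : IsH1 u) : Tendsto u (cocompact ℝ) (𝓝 0) := by
  have H := (isH1_iff _).1 hu
  have hac := H.1.mul H.1
  have hd : Integrable (deriv (fun x => u x * u x)) := by
    have : Integrable (fun x => deriv u x * u x + u x * deriv u x) :=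
      (H.2.2.integrable_mul H.2.1).add (H.2.1.integrable_mul H.2.2)
    refine this.congr ?_
    filter_upwards [H.1.ae_diff] with x hx
    exact (hx.hasDerivAt.mul hx.hasDerivAt).deriv.symm
  have hi : Integrable (fun x => u x * u x) := H.2.1.integrable_mul H.2.1
  have e : ∀ x, u x * u x = u 0 * u 0 + ∫ t in (0:ℝ)..x, deriv (fun x => u x * u x) t := by
    intro x; rw [(hac 0 x).integral_deriv_eq_sub]; ring
  have t1 : Tendsto (fun x => u x * u x) atTop
      (𝓝 (u 0 * u 0 + ∫ t in Set.Ioi (0:ℝ), deriv (fun x => u x * u x) t)) := by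
    refine Tendsto.congr (fun x => (e x).symm) ?_
    exact (intervalIntegral_tendsto_integral_Ioi 0 hd.integrableOn tendsto_id).const_add _
  have t2 : Tendsto (fun x => u x * u x) atBot
      (𝓝 (u 0 * u 0 - ∫ t in Set.Iic (0:ℝ), deriv (fun x => u x * u x) t)) := by
    refine Tendsto.congr (fun x => (e x).symm) ?_
    refine ((intervalIntegral_tendsto_integral_Iic 0 hd.integrableOn tendsto_id).const_sub
      (u 0 * u 0)).congr ?_
    intro x
    rw [intervalIntegral.integral_symm]; simp
  have z1 := IntegrableAtFilter.eq_zero_of_tendsto (hi.integrableAtFilter atTop) (by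
    intro s hs
    obtain ⟨b, hb⟩ := mem_atTop_sets.1 hs
    rw [← top_le_iff, ← Real.volume_Ici (a := b)]
    exact measure_mono hb) t1
  have z2 := IntegrableAtFilter.eq_zero_of_tendsto (hi.integrableAtFilter atBot) (by
    intro s hs
    obtain ⟨b, hb⟩ := mem_atBot_sets.1 hs
    rw [← top_le_iff, ← Real.volume_Iic (a := b)]
    exact measure_mono hb) t2
  rw [z1] at t1; rw [z2] at t2
  have t3 : Tendsto (fun x => u x * u x) (cocompact ℝ) (𝓝 0) := by
    rw [cocompact_eq_atBot_atTop]; exact t2.sup t1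
  have t4 := (t3.sqrt)
  simp only [Real.sqrt_mul_self_eq_abs, Real.sqrt_zero] at t4
  exact (tendsto_zero_iff_abs_tendsto_zero _).2 t4

lemma ae_exists_gt {P : ℝ → Prop} (h : ∀ᵐ x : ℝ, P x) (x : ℝ) : ∃ y, x < y ∧ P y := by
  by_contra! hc
  have : volume (Set.Ioi x) ≤ volume {y | ¬ P y} := measure_mono fun y hy => hc y hy
  rw [ae_iff.1 h, Real.volume_Ioi] at this
  simp at this

lemma ae_exists_lt {P : ℝ → Prop} (h : ∀ᵐ x : ℝ, P x) (x : ℝ) : ∃ y, y < x ∧ P y := by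
  by_contra! hc
  have : volume (Set.Iio x) ≤ volume {y | ¬ P y} := measure_mono fun y hy => hc y hy
  rw [ae_iff.1 h, Real.volume_Iio] at this
  simp at this

lemma V_bdd {V : ℝ → ℝ} (hV : MemLp V ⊤ (volume : Measure ℝ)) (hm : Monotone V) :
    ∃ C, ∀ x, |V x| ≤ C := by
  obtain ⟨C, hC⟩ : ∃ C : ℝ, ∀ᵐ x, ‖V x‖ ≤ C := by
    refine ⟨(eLpNorm V ⊤ volume).toReal, ?_⟩
    have h1 := hV.2
    rw [eLpNorm_exponent_top] at *
    filter_upwards [ae_le_eLpNormEssSup (f := V) (μ := volume)] with x hx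
    rw [← toReal_enorm]
    exact ENNReal.toReal_mono h1.ne hx
  refine ⟨C, fun x => ?_⟩
  obtain ⟨y, hy, h1⟩ := ae_exists_gt hC x
  obtain ⟨z, hz, h2⟩ := ae_exists_lt hC x
  have := abs_le.1 h1
  have := abs_le.1 h2
  exact abs_le.2 ⟨by linarith [hm hz.le], by linarith [hm hy.le]⟩

lemma V_pos {V : ℝ → ℝ} {C : ℝ} (hC : ∀ x, |V x| ≤ C) (hm : Monotone V)
    (hpos : 0 < essInf V (volume : Measure ℝ)) (x : ℝ) : 0 < V x := by
  have h : ∀ᵐ y, essInf V volume ≤ V y :=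
    ae_essInf_le (isBoundedUnder_of ⟨-C, fun x => (abs_le.1 (hC x)).1⟩)
  obtain ⟨y, hy, h1⟩ := ae_exists_lt h x
  linarith [hm hy.le]

lemma V_delta {V : ℝ → ℝ} {C : ℝ} (hC : ∀ x, |V x| ≤ C) (hm : Monotone V)
    (hlt : essInf V (volume : Measure ℝ) < essSup V (volume : Measure ℝ))
    {h : ℝ} (hh : 0 < h) {k : ℝ} (hk : 0 < k) (b : ℝ) :
    0 < ∫ x, (V x - V (x - h)) * (et k b x) ^ 2 := by
  have hm' : Monotone (fun x => V (x - h)) := fun x y hxy => hm (by linarith)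
  have hi : Integrable (fun x => (V x - V (x - h)) * (et k b x) ^ 2) := by
    refine (et_L2 hk b).integrable_sq.bdd_mul (c := C + C)
      (hm.measurable.sub hm'.measurable).aestronglyMeasurable ?_
    exact Eventually.of_forall fun x => (norm_sub_le _ _).trans (add_le_add (hC _) (hC _))
  have hn : ∀ x, 0 ≤ (V x - V (x - h)) * (et k b x) ^ 2 := fun x =>
    mul_nonneg (sub_nonneg.2 (hm (by linarith))) (sq_nonneg _)
  refine lt_of_le_of_ne (integral_nonneg hn) fun he => ?_
  have hz := (integral_eq_zero_iff_of_nonneg hn hi).1 he.symm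
  obtain ⟨x, y, hxy⟩ : ∃ x y, V x < V y := by
    by_contra! hc
    have : V = fun _ => V 0 := funext fun x => le_antisymm (hc _ _) (hc _ _)
    rw [this, essInf_const', essSup_const'] at hlt
    · exact lt_irrefl _ hlt
  set S := {z | V y ≤ V z} with hS
  have hSb : BddBelow S := ⟨x, fun z hz => by
    by_contra! hc
    have h1 := hm hc.le
    have h2 : V y ≤ V z := hz
    linarith⟩
  have hSn : S.Nonempty := ⟨y, le_refl (V y)⟩
  have hsub : Set.Ioo (sInf S) (sInf S + h) ⊆
      {x | ¬ (fun x => (V x - V (x - h)) * (et k b x) ^ 2) x = (0 : ℝ → ℝ) x} := by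
    rintro t ⟨h1, h2⟩
    obtain ⟨z, hz, hzt⟩ := exists_lt_of_csInf_lt hSn h1
    have h3 : V y ≤ V t := le_trans hz (hm hzt.le)
    have h4 : V (t - h) < V y := by
      by_contra! hc
      have := csInf_le hSb (show t - h ∈ S from hc)
      linarith
    have : 0 < (V t - V (t - h)) * (et k b t) ^ 2 :=
      mul_pos (by linarith) (pow_pos (et_pos k b t) 2)
    exact this.ne'
  have := measure_mono (μ := volume) hsub
  rw [ae_iff.1 hz, Real.volume_Ioo] at this
  simp at this
  linarith

lemma IV_nonneg {V : ℝ → ℝ} (h0 : ∀ x, 0 ≤ V x) (u : ℝ → ℝ) : 0 ≤ IV V u :=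
  integral_nonneg fun x => add_nonneg (sq_nonneg _) (mul_nonneg (h0 x) (sq_nonneg _))

lemma et_Ka {k : ℝ} (hk : 0 < k) (b : ℝ) : InKa b (et k b) :=
  mkKa (et_H1 hk b) (et_self k b) fun x => by
    rw [abs_of_pos (et_pos k b x)]; exact et_le hk b x

lemma FV_strict {V : ℝ → ℝ} {C : ℝ} (hC : ∀ x, |V x| ≤ C) (hm : Monotone V)
    (h0 : ∀ x, 0 ≤ V x)
    (hlt : essInf V (volume : Measure ℝ) < essSup V (volume : Measure ℝ)) :
    StrictMono (fun a : ℝ => FV V a) := by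
  intro a b hab
  have hC0 : 0 ≤ C := (abs_nonneg _).trans (hC 0)
  obtain ⟨k, hk, hVk⟩ : ∃ k : ℝ, 0 < k ∧ ∀ x, V x ≤ k ^ 2 :=
    ⟨C + 1, by linarith, fun x => by nlinarith [(abs_le.1 (hC x)).2]⟩
  set h := b - a with hh
  have hpos : 0 < h := sub_pos.2 hab
  have hd := V_delta hC hm hlt hpos hk b
  set δ := ∫ x, (V x - V (x - h)) * (et k b x) ^ 2 with hδ
  have hm' : Monotone (fun x => V (x - h)) := fun x y hxy => hm (by linarith)
  suffices FV V a + δ ≤ FV V b by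
    show FV V a < FV V b
    linarith
  refine le_csInf ⟨_, _, et_Ka hk b, rfl⟩ ?_
  rintro r ⟨u, hu, rfl⟩
  have hen := max_energy hm hC h0 hk hVk hu
  set w : ℝ → ℝ := fun x => max (u x) (et k b x) with hw
  have hwH : IsH1 w := max_H1 hu.1 (et_H1 hk b)
  have hwe : ∀ x, et k b x ≤ w x := fun x => le_max_right _ _
  have hKa : InKa a (fun x => w (x + h)) := by
    refine mkKa (shift_H1 h hwH) ?_ ?_
    · simp [hw, hh, hu.2.1, et_self]
    · intro x
      rw [abs_of_pos (lt_of_lt_of_le (et_pos k b _) (hwe _))]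
      exact max_le (abs_le.1 (hu.le _)).2 (et_le hk _ _)
  have hFa : FV V a ≤ IV V (fun x => w (x + h)) :=
    csInf_le ⟨0, by rintro _ ⟨v, _, rfl⟩; exact IV_nonneg h0 v⟩ ⟨_, hKa, rfl⟩
  rw [shift_IV] at hFa
  have hdiff : δ ≤ IV V w - IV (fun x => V (x - h)) w := by
    have i1 := int_IV hm hC hwH
    have i2 := int_IV hm' (fun x => hC (x - h)) hwH
    unfold IV
    rw [← integral_sub i1 i2, hδ]
    refine integral_mono_of_nonneg (Eventually.of_forall fun x => ?_) (i1.sub i2)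
      (Eventually.of_forall fun x => ?_)
    · exact mul_nonneg (sub_nonneg.2 (hm (by linarith))) (sq_nonneg _)
    · have h1 : 0 ≤ V x - V (x - h) := sub_nonneg.2 (hm (by linarith))
      have h2 : et k b x ^ 2 ≤ w x ^ 2 := pow_le_pow_left₀ (et_pos k b x).le (hwe x) 2
      have h3 := mul_le_mul_of_nonneg_left h2 h1
      linarith
  linarith

lemma IV_smul (V u : ℝ → ℝ) (c : ℝ) : IV V (fun x => c * u x) = c ^ 2 * IV V u := by
  unfold IV
  rw [← integral_const_mul]
  congr 1; ext x
  rw [deriv_const_mul_field]; ring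

lemma smul_H1 {u : ℝ → ℝ} (c : ℝ) (hu : IsH1 u) : IsH1 (fun x => c * u x) := by
  obtain ⟨hc, hL, u', hu', hf⟩ := hu
  refine ⟨by fun_prop, hL.const_mul c, fun x => c * u' x, hu'.const_mul c, fun x => ?_⟩
  beta_reduce
  rw [intervalIntegral.integral_const_mul, hf x]; ring

lemma exists_max_H1 {u : ℝ → ℝ} (hu : IsH1 u) (hne : u ≠ 0) :
    ∃ a, u a ≠ 0 ∧ ∀ x, |u x| ≤ |u a| := by
  obtain ⟨y, hy⟩ := Function.ne_iff.1 hne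
  have hy' : 0 < |u y| := abs_pos.2 hy
  have ht := (tendsto_zero_H1 hu).abs
  rw [abs_zero] at ht
  obtain ⟨a, ha⟩ := (hu.1.abs).exists_forall_ge' y
    ((ht.eventually (gt_mem_nhds hy')).mono fun x hx => hx.le)
  exact ⟨a, abs_pos.1 (hy'.trans_le (ha y)), ha⟩

/-- **Strictly increasing `F` and non-attainment for non-constant non-decreasing potentials.**
If `V ∈ L^∞(ℝ)` is non-decreasing with `0 < v₀ := ess inf V < v₁ := ess sup V`, then
`a ↦ F(a;V)` is strictly increasing and the infimum `m(V)` is not attained. -/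
theorem strictMono_F_and_not_attained (V : ℝ → ℝ) (hV : MemLp V ⊤ (volume : Measure ℝ))
    (hmono : Monotone V) (hpos : 0 < essInf V (volume : Measure ℝ))
    (hlt : essInf V (volume : Measure ℝ) < essSup V (volume : Measure ℝ)) :
    StrictMono (fun a : ℝ => FV V a) ∧
      ∀ u : ℝ → ℝ, IsH1 u → u ≠ 0 → IV V u / (supNorm u) ^ 2 ≠ mV V := by
  obtain ⟨C, hC⟩ := V_bdd hV hmono
  have h0 : ∀ x, 0 ≤ V x := fun x => (V_pos hC hmono hpos x).le
  have hS := FV_strict hC hmono h0 hlt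
  refine ⟨hS, fun u hu hne he => ?_⟩
  obtain ⟨a, ha, hmax⟩ := exists_max_H1 hu hne
  have hsup : supNorm u = |u a| :=
    le_antisymm (ciSup_le hmax) (supNorm_le ⟨|u a|, by rintro _ ⟨x, rfl⟩; exact hmax x⟩ a)
  have hK : InKa a (fun x => (u a)⁻¹ * u x) := by
    refine mkKa (smul_H1 _ hu) (inv_mul_cancel₀ ha) fun x => ?_
    rw [abs_mul, abs_inv, inv_mul_le_iff₀ (abs_pos.2 ha), mul_one]
    exact hmax x
  have hFa : FV V a ≤ IV V (fun x => (u a)⁻¹ * u x) :=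
    csInf_le ⟨0, by rintro _ ⟨v, _, rfl⟩; exact IV_nonneg h0 v⟩ ⟨_, hK, rfl⟩
  rw [IV_smul] at hFa
  have he2 : (u a)⁻¹ ^ 2 * IV V u = mV V := by
    rw [← he, hsup, sq_abs]; field_simp
  rw [he2] at hFa
  have hlt' : FV V (a - 1) < FV V a := hS (by linarith : a - 1 < a)
  obtain ⟨r, ⟨w, hw, rfl⟩, hr⟩ := exists_lt_of_csInf_lt
    (s := {r : ℝ | ∃ u : ℝ → ℝ, InKa (a - 1) u ∧ r = IV V u})
    ⟨_, _, et_Ka one_pos (a - 1), rfl⟩ hlt'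
  have hmw : mV V ≤ IV V w / (supNorm w) ^ 2 := by
    refine csInf_le ⟨0, ?_⟩ ⟨w, hw.1, ?_, rfl⟩
    · rintro _ ⟨v, _, _, rfl⟩
      exact div_nonneg (IV_nonneg h0 v) (sq_nonneg _)
    · rintro rfl
      have := hw.2.1
      simp at this
  rw [hw.2.2] at hmw
  norm_num at hmw
  linarith
end

section
/- Let V > 0 be a positive constant potential. Then m(V) = 2√V, and the set of minimizers is M(V) = { c·u_a : c ∈ ℝ∖{0}, a ∈ ℝ } where u_a(x) = e^{−√V |x−a|}; that is, u ∈ H¹(ℝ)∖{0} satisfies I(u;V)/‖u‖_∞² = 2√V if and only if u(x) = c e^{−√V |x−a|} for some c ≠ 0 and a ∈ ℝ. -/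
open MeasureTheory Filter Real Topology

theorem h1_basic {u : ℝ → ℝ} (hu : IsH1 u) :
    (∀ a b : ℝ, AbsolutelyContinuousOnInterval u a b) ∧ (∀ᵐ x : ℝ, DifferentiableAt ℝ u x) ∧
      MemLp (deriv u) 2 (volume : Measure ℝ) := by
  obtain ⟨hc, hL, u', hu', hx⟩ := hu
  have hloc : LocallyIntegrable u' volume := hu'.locallyIntegrable (by norm_num)
  have hd : ∀ᵐ x : ℝ, HasDerivAt u (u' x) x := by
    filter_upwards [_root_.LocallyIntegrable.ae_hasDerivAt_integral hloc] with x h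
    have h2 := (h 0).const_add (u 0)
    have : u = fun x => u 0 + ∫ t in (0:ℝ)..x, u' t := funext hx
    rw [this]
    exact h2
  refine ⟨fun a b => ?_, ?_, ?_⟩
  · have hI : IntervalIntegrable u' volume (-(|a| + |b|)) (|a| + |b|) :=
      intervalIntegrable_iff.2 ((hloc.integrableOn_isCompact isCompact_uIcc).mono_set Set.uIoc_subset_uIcc)
    have hle : -(|a| + |b|) ≤ |a| + |b| := by
      have := abs_nonneg a; have := abs_nonneg b; linarith
    have h0 : (0:ℝ) ∈ Set.uIcc (-(|a| + |b|)) (|a| + |b|) := by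
      rw [Set.uIcc_of_le hle]
      have := abs_nonneg a; have := abs_nonneg b
      constructor <;> linarith
    have h1 := hI.absolutelyContinuousOnInterval_intervalIntegral h0
    have hconst : AbsolutelyContinuousOnInterval (fun _ : ℝ => u 0) (-(|a| + |b|)) (|a| + |b|) :=
      contDiffOn_const.absolutelyContinuousOnInterval
    have h2 := hconst.add h1
    have h3 : u = (fun _ : ℝ => u 0) + fun x => ∫ t in (0:ℝ)..x, u' t := funext hx
    rw [← h3] at h2
    refine h2.mono ?_
    rw [Set.uIcc_of_le hle]
    intro x hx
    rw [Set.mem_uIcc] at hx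
    have := le_abs_self a; have := le_abs_self b
    have := neg_abs_le a; have := neg_abs_le b
    have := abs_nonneg a; have := abs_nonneg b
    rcases hx with h | h <;> constructor <;> linarith [h.1, h.2]
  · filter_upwards [hd] with x h using h.differentiableAt
  · refine hu'.ae_eq ?_
    filter_upwards [hd] with x h using h.deriv.symm

theorem h1_int {u : ℝ → ℝ} (hu : IsH1 u) :
    Integrable (fun x => u x ^ 2) ∧ Integrable (fun x => deriv u x ^ 2) ∧
      Integrable (fun x => deriv u x * u x) := by
  obtain ⟨_, _, hd⟩ := h1_basic hu
  exact ⟨hu.2.1.integrable_sq, hd.integrable_sq, hd.integrable_mul hu.2.1⟩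

theorem h1_ftc {u : ℝ → ℝ} (hu : IsH1 u) (a b : ℝ) :
    ∫ x in a..b, 2 * (deriv u x * u x) = u b ^ 2 - u a ^ 2 := by
  have h := (h1_basic hu).1 a b
  have := h.integral_deriv_mul_eq_sub h
  rw [pow_two, pow_two, ← this]
  congr 1
  ext x
  ring

theorem h1_top {u : ℝ → ℝ} (hu : IsH1 u) (a : ℝ) :
    Tendsto (fun x => u x ^ 2) atTop (𝓝 0) ∧
    ∫ x in Set.Ioi a, 2 * (deriv u x * u x) = - u a ^ 2 := by
  obtain ⟨i1, i2, i3⟩ := h1_int hu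
  have i4 := i3.const_mul 2
  have ht := intervalIntegral_tendsto_integral_Ioi a i4.integrableOn tendsto_id
  simp only [h1_ftc hu, id] at ht
  have ht2 := ht.add_const (u a ^ 2)
  simp only [sub_add_cancel] at ht2
  have h0 := IntegrableAtFilter.eq_zero_of_tendsto (l := atTop) (μ := volume)
    (i1.integrableAtFilter _) (by
      intro s hs
      obtain ⟨b, hb⟩ := mem_atTop_sets.1 hs
      rw [← top_le_iff, ← volume_Ici (a := b)]
      exact measure_mono hb) ht2
  rw [h0] at ht2
  exact ⟨ht2, by linarith⟩

theorem h1_bot {u : ℝ → ℝ} (hu : IsH1 u) (a : ℝ) :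
    Tendsto (fun x => u x ^ 2) atBot (𝓝 0) ∧
    ∫ x in Set.Iic a, 2 * (deriv u x * u x) = u a ^ 2 := by
  obtain ⟨i1, i2, i3⟩ := h1_int hu
  have i4 := i3.const_mul 2
  have ht := intervalIntegral_tendsto_integral_Iic a i4.integrableOn tendsto_id
  simp only [h1_ftc hu, id] at ht
  have ht2 := ht.const_sub (u a ^ 2)
  simp only [sub_sub_cancel] at ht2
  have h0 := IntegrableAtFilter.eq_zero_of_tendsto (l := atBot) (μ := volume)
    (i1.integrableAtFilter _) (by
      intro s hs
      obtain ⟨b, hb⟩ := mem_atBot_sets.1 hs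
      rw [← top_le_iff, ← volume_Iic (a := b)]
      exact measure_mono hb) ht2
  rw [h0] at ht2
  exact ⟨ht2, by linarith⟩

theorem h1_sup {u : ℝ → ℝ} (hu : IsH1 u) (hne : u ≠ 0) :
    ∃ a, u a ≠ 0 ∧ supNorm u = |u a| := by
  obtain ⟨x₀, hx₀⟩ : ∃ x, u x ≠ 0 := by
    by_contra! h
    exact hne (funext h)
  have hev : ∀ᶠ x in cocompact ℝ, u x ^ 2 ≤ u x₀ ^ 2 := by
    rw [cocompact_eq_atBot_atTop]
    have hp : 0 < u x₀ ^ 2 := by positivity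
    exact eventually_sup.2 ⟨(h1_bot hu 0).1.eventually (ge_mem_nhds hp),
      (h1_top hu 0).1.eventually (ge_mem_nhds hp)⟩
  obtain ⟨a, ha⟩ := (hu.1.pow 2).exists_forall_ge' x₀ hev
  have ha' : ∀ x, |u x| ≤ |u a| := fun x => sq_le_sq.1 (ha x)
  refine ⟨a, ?_, ?_⟩
  · intro h
    have := ha' x₀
    rw [h, abs_zero] at this
    exact hx₀ (abs_nonpos_iff.1 this)
  · exact le_antisymm (ciSup_le ha') (le_ciSup (f := fun x => |u x|) ⟨|u a|, by rintro _ ⟨x, rfl⟩; exact ha' x⟩ a)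

theorem h1_id {u : ℝ → ℝ} (hu : IsH1 u) (s : ℝ) (a : ℝ) :
    IV (fun _ => s ^ 2) u = 2 * s * u a ^ 2 + (∫ x in Set.Ioi a, (deriv u x + s * u x) ^ 2)
      + (∫ x in Set.Iic a, (deriv u x - s * u x) ^ 2) := by
  obtain ⟨i1, i2, i3⟩ := h1_int hu
  have i4 := (i3.const_mul 2).const_mul s
  have i5 : Integrable (fun x => deriv u x ^ 2 + s ^ 2 * u x ^ 2) := i2.add (i1.const_mul _)
  have e1 : ∫ x in Set.Ioi a, (deriv u x + s * u x) ^ 2 =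
      (∫ x in Set.Ioi a, (deriv u x ^ 2 + s ^ 2 * u x ^ 2)) - s * u a ^ 2 := by
    have : ∀ x, (deriv u x + s * u x) ^ 2 =
        (deriv u x ^ 2 + s ^ 2 * u x ^ 2) + s * (2 * (deriv u x * u x)) := fun x => by ring
    simp only [this]
    rw [integral_add i5.integrableOn i4.integrableOn, integral_const_mul, (h1_top hu a).2]
    ring
  have e2 : ∫ x in Set.Iic a, (deriv u x - s * u x) ^ 2 =
      (∫ x in Set.Iic a, (deriv u x ^ 2 + s ^ 2 * u x ^ 2)) - s * u a ^ 2 := by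
    have : ∀ x, (deriv u x - s * u x) ^ 2 =
        (deriv u x ^ 2 + s ^ 2 * u x ^ 2) - s * (2 * (deriv u x * u x)) := fun x => by ring
    simp only [this]
    rw [integral_sub i5.integrableOn i4.integrableOn, integral_const_mul, (h1_bot hu a).2]
  have e3 := intervalIntegral.integral_Iic_add_Ioi (b := a) i5.integrableOn i5.integrableOn
  rw [e1, e2]
  unfold IV
  rw [← e3]
  ring

theorem h1_ode {u : ℝ → ℝ} (hu : IsH1 u) (s a b : ℝ)
    (h : ∀ᵐ x : ℝ, x ∈ Set.uIcc a b → deriv u x + s * u x = 0) :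
    u b = u a * Real.exp (-s * (b - a)) := by
  obtain ⟨hac, hd, -⟩ := h1_basic hu
  have he : AbsolutelyContinuousOnInterval (fun x => Real.exp (s * x)) a b :=
    ContDiffOn.absolutelyContinuousOnInterval (by fun_prop)
  obtain ⟨C, hC⟩ := (he.mul (hac a b)).const_of_ae_hasDerivAt_zero (by
    filter_upwards [h, hd] with x hx hdx hm
    have h1 : HasDerivAt (fun x => Real.exp (s * x)) (Real.exp (s * x) * (s * 1)) x :=
      ((hasDerivAt_id x).const_mul s).exp
    have h2 := h1.mul hdx.hasDerivAt
    refine h2.congr_deriv ?_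
    have := hx hm
    linear_combination (Real.exp (s * x)) * this)
  have ha := hC a Set.left_mem_uIcc
  have hb := hC b Set.right_mem_uIcc
  simp only [Pi.mul_apply] at ha hb
  have h3 : -s * (b - a) = s * a - s * b := by ring
  rw [h3, Real.exp_sub]
  field_simp
  linarith

theorem exp_deriv (s a c : ℝ) (x : ℝ) :
    (a < x → HasDerivAt (fun x : ℝ => c * Real.exp (-s * |x - a|))
      (-s * (c * Real.exp (-s * |x - a|))) x) ∧
    (x < a → HasDerivAt (fun x : ℝ => c * Real.exp (-s * |x - a|))
      (s * (c * Real.exp (-s * |x - a|))) x) := by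
  constructor
  · intro h
    have h1 : HasDerivAt (fun x : ℝ => |x - a|) 1 x :=
      (hasDerivAt_abs_pos (sub_pos.2 h)).comp_sub_const x a
    exact ((h1.const_mul (-s)).exp.const_mul c).congr_deriv (by ring)
  · intro h
    have h1 : HasDerivAt (fun x : ℝ => |x - a|) (-1) x :=
      (hasDerivAt_abs_neg (sub_neg.2 h)).comp_sub_const x a
    exact ((h1.const_mul (-s)).exp.const_mul c).congr_deriv (by ring)

theorem exp_h1 (s a c : ℝ) (hs : 0 < s) :
    IsH1 (fun x : ℝ => c * Real.exp (-s * |x - a|)) := by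
  set u := (fun x : ℝ => c * Real.exp (-s * |x - a|)) with hu
  have hc : Continuous u := by fun_prop
  have hm : MemLp u 2 (volume : Measure ℝ) := by
    rw [memLp_two_iff_integrable_sq hc.aestronglyMeasurable]
    have h0 : Integrable (fun x : ℝ => Real.exp (-(2 * s) * |x|)) := by
      rw [← integrableOn_univ, ← Set.Iic_union_Ioi (a := (0:ℝ))]
      refine IntegrableOn.union ?_ ?_
      · refine (integrableOn_exp_mul_Iic (a := 2 * s) (by linarith) 0).congr_fun ?_ measurableSet_Iic
        intro x hx
        simp only [abs_of_nonpos (Set.mem_Iic.1 hx)]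
        congr 1
        ring
      · refine (integrableOn_exp_mul_Ioi (a := -(2 * s)) (by linarith) 0).congr_fun ?_ measurableSet_Ioi
        intro x hx
        simp only [abs_of_pos (Set.mem_Ioi.1 hx)]
    have h1 := (h0.comp_sub_right a).const_mul (c ^ 2)
    refine h1.congr (Eventually.of_forall fun x => ?_)
    simp only [hu, mul_pow, ← Real.exp_nat_mul]
    congr 2
    push_cast
    ring
  have hne : ∀ᵐ x : ℝ, x ≠ a := by
    simp [ae_iff, measure_singleton]
  have hd : MemLp (deriv u) 2 (volume : Measure ℝ) := by
    refine (hm.const_mul s).of_le (measurable_deriv u).aestronglyMeasurable ?_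
    filter_upwards [hne] with x hx
    rcases lt_or_gt_of_ne hx with h | h
    · rw [((exp_deriv s a c x).2 h).deriv]
    · rw [((exp_deriv s a c x).1 h).deriv]
      simp [hu]
  refine ⟨hc, hm, deriv u, hd, fun x => ?_⟩
  have := integral_eq_of_hasDerivAt_off_countable u (deriv u) (a := 0) (b := x)
    (Set.countable_singleton a) hc.continuousOn (by
      rintro y ⟨-, hy⟩
      rcases lt_or_gt_of_ne hy with h | h
      · exact ((exp_deriv s a c y).2 h).differentiableAt.hasDerivAt
      · exact ((exp_deriv s a c y).1 h).differentiableAt.hasDerivAt)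
    (intervalIntegrable_iff.2 (((hd.locallyIntegrable (by norm_num)).integrableOn_isCompact
      isCompact_uIcc).mono_set Set.uIoc_subset_uIcc))
  rw [this]; ring

theorem exp_IV (s a c : ℝ) (hs : 0 < s) :
    IV (fun _ => s ^ 2) (fun x : ℝ => c * Real.exp (-s * |x - a|)) = 2 * s * c ^ 2 := by
  rw [h1_id (exp_h1 s a c hs) s a]
  rw [setIntegral_congr_fun (g := fun _ => (0:ℝ)) measurableSet_Ioi, integral_Iic_eq_integral_Iio,
    setIntegral_congr_fun (g := fun _ => (0:ℝ)) measurableSet_Iio]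
  · simp
  · intro x hx
    simp only
    rw [((exp_deriv s a c x).2 hx).deriv]
    ring
  · intro x hx
    simp only
    rw [((exp_deriv s a c x).1 hx).deriv]
    ring

theorem exp_sup (s a c : ℝ) (hs : 0 < s) :
    supNorm (fun x : ℝ => c * Real.exp (-s * |x - a|)) = |c| := by
  have hle : ∀ x, |c * Real.exp (-s * |x - a|)| ≤ |c| := fun x => by
    rw [abs_mul, Real.abs_exp]
    refine mul_le_of_le_one_right (abs_nonneg c) (Real.exp_le_one_iff.2 ?_)
    nlinarith [abs_nonneg (x - a)]
  refine le_antisymm (ciSup_le hle) ?_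
  have := le_ciSup (f := fun x : ℝ => |c * Real.exp (-s * |x - a|)|)
    ⟨|c|, by rintro _ ⟨x, rfl⟩; exact hle x⟩ a
  simpa [supNorm] using this

theorem exp_quot (s a c : ℝ) (hs : 0 < s) (hc : c ≠ 0) :
    IV (fun _ => s ^ 2) (fun x : ℝ => c * Real.exp (-s * |x - a|)) /
      supNorm (fun x : ℝ => c * Real.exp (-s * |x - a|)) ^ 2 = 2 * s := by
  rw [exp_IV s a c hs, exp_sup s a c hs, sq_abs]
  field_simp

theorem quot_ge {u : ℝ → ℝ} (hu : IsH1 u) (hne : u ≠ 0) (s : ℝ) :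
    2 * s ≤ IV (fun _ => s ^ 2) u / supNorm u ^ 2 := by
  obtain ⟨a, ha, hsup⟩ := h1_sup hu hne
  have hp : 0 < u a ^ 2 := by positivity
  rw [hsup, sq_abs, le_div_iff₀ hp, h1_id hu s a]
  have p1 : 0 ≤ ∫ x in Set.Ioi a, (deriv u x + s * u x) ^ 2 := integral_nonneg fun x => sq_nonneg _
  have p2 : 0 ≤ ∫ x in Set.Iic a, (deriv u x - s * u x) ^ 2 := integral_nonneg fun x => sq_nonneg _
  linarith

theorem quot_eq {u : ℝ → ℝ} (hu : IsH1 u) (hne : u ≠ 0) (s : ℝ)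
    (h : IV (fun _ => s ^ 2) u / supNorm u ^ 2 = 2 * s) :
    ∃ c a : ℝ, c ≠ 0 ∧ u = fun x : ℝ => c * Real.exp (-s * |x - a|) := by
  obtain ⟨a, ha, hsup⟩ := h1_sup hu hne
  have hp : 0 < u a ^ 2 := by positivity
  rw [hsup, sq_abs, div_eq_iff hp.ne', h1_id hu s a] at h
  have p1 : 0 ≤ ∫ x in Set.Ioi a, (deriv u x + s * u x) ^ 2 := integral_nonneg fun x => sq_nonneg _
  have p2 : 0 ≤ ∫ x in Set.Iic a, (deriv u x - s * u x) ^ 2 := integral_nonneg fun x => sq_nonneg _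
  have z1 : ∫ x in Set.Ioi a, (deriv u x + s * u x) ^ 2 = 0 := by linarith
  have z2 : ∫ x in Set.Iic a, (deriv u x - s * u x) ^ 2 = 0 := by linarith
  have hd := (h1_basic hu).2.2
  have j1 : Integrable fun x => (deriv u x + s * u x) ^ 2 :=
    (hd.add (hu.2.1.const_mul s)).integrable_sq
  have j2 : Integrable fun x => (deriv u x - s * u x) ^ 2 :=
    (hd.sub (hu.2.1.const_mul s)).integrable_sq
  have w1 := (integral_eq_zero_iff_of_nonneg (fun x => sq_nonneg _) j1.integrableOn).1 z1
  have w2 := (integral_eq_zero_iff_of_nonneg (fun x => sq_nonneg _) j2.integrableOn).1 z2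
  have w1 := (ae_restrict_iff' measurableSet_Ioi).1 w1
  have w2 := (ae_restrict_iff' measurableSet_Iic).1 w2
  have hnea : ∀ᵐ x : ℝ, x ≠ a := by
    simp [ae_iff, measure_singleton]
  refine ⟨u a, a, ha, funext fun x => ?_⟩
  rcases le_total a x with hx | hx
  · rw [abs_of_nonneg (sub_nonneg.2 hx)]
    apply h1_ode hu
    filter_upwards [w1, hnea] with y hy hya hm
    rw [Set.uIcc_of_le hx] at hm
    have := hy (lt_of_le_of_ne hm.1 hya.symm)
    simpa using this
  · rw [abs_of_nonpos (sub_nonpos.2 hx), show -s * -(x - a) = -(-s) * (x - a) by ring]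
    apply h1_ode hu
    filter_upwards [w2] with y hy hm
    rw [Set.uIcc_of_ge hx] at hm
    have := hy hm.2
    have h3 : deriv u y - s * u y = 0 := by simpa using this
    linarith

/-- **Constant potentials.** For a constant potential `V ≡ v > 0`, we have `m(V) = 2√v`,
and `u ∈ H¹(ℝ)∖{0}` is a minimizer (`I(u;V)/‖u‖_∞² = m(V) = 2√v`) if and only if
`u(x) = c e^{-√v |x-a|}` for some `c ≠ 0` and `a ∈ ℝ`. -/
theorem mV_const_and_minimizers (v : ℝ) (hv : 0 < v) :
    mV (fun _ : ℝ => v) = 2 * Real.sqrt v ∧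
      ∀ u : ℝ → ℝ, IsH1 u → u ≠ 0 →
        (IV (fun _ : ℝ => v) u / (supNorm u) ^ 2 = 2 * Real.sqrt v ↔
          ∃ c a : ℝ, c ≠ 0 ∧ u = fun x : ℝ => c * Real.exp (-(Real.sqrt v) * |x - a|)) := by
  have hs : 0 < Real.sqrt v := Real.sqrt_pos.2 hv
  obtain ⟨s, hsv⟩ : ∃ s, s = Real.sqrt v := ⟨_, rfl⟩
  have hv2 : v = s ^ 2 := by rw [hsv, Real.sq_sqrt hv.le]
  rw [← hsv] at hs ⊢
  rw [hv2]
  refine ⟨?_, fun u hu hne => ⟨quot_eq hu hne s, ?_⟩⟩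
  · refine IsLeast.csInf_eq ⟨⟨_, exp_h1 s 0 1 hs, ?_, (exp_quot s 0 1 hs one_ne_zero).symm⟩, ?_⟩
    · intro h
      have := congrFun h 0
      simp at this
    · rintro r ⟨u, hu, hne, rfl⟩
      exact quot_ge hu hne s
  · rintro ⟨c, a, hc, rfl⟩
    exact exp_quot s a c hs hc
end
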